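/- arXiv:2605.25444 — 7 statements merged into one kernel-verified Lean document; each statement's English description precedes it below -/
import Mathlib

section
/- There exists n₀ such that for every odd n ≥ n₀ the following holds: there exist families of permutations π_j, ρ_j of Fin n indexed by j : Fin ((n−1)/2) such that (a) for all j and i: π_j i ≠ i, ρ_j i ≠ i, and π_j i ≠ ρ_j i; (b) for every pair (i, k) with k ≠ i there is exactly one occurrence of k among the values π_1 i, …, π_{(n−1)/2} i, ρ_1 i, …, ρ_{(n−1)/2} i (so the 2-factors F_j with edge sets {(i, π_j i)} ∪ {(i, ρ_j i)} decompose K_{n,n} minus the diagonal matching); and (c) for every j, the cycle type of the permutation (ρ_j)⁻¹ ∘ π_j is {2, 2, …, 2, 3} with (n−3)/2 twos when n ≡ 3 (mod 4), and {2, 2, …, 2, 5} with (n−5)/2 twos when n ≡ 1 (mod 4). Equivalently, K_{n,n} minus a perfect matching decomposes into (n−1)/2 spanning 2-factors, each isomorphic to ((n−3)/2)·C₄ ∪ C₆ when n ≡ 3 (mod 4) and to ((n−5)/2)·C₄ ∪ C₁₀ when n ≡ 1 (mod 4). -/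
/-!
Write `n = 2ek + 1` and split `n - 1` of the points into `k` blocks of size `2e`, leaving one
point `∞`.  Let `σ` be an idempotent Latin square of order `k ≠ 2`: for odd `k` the square `2a - s`
over `ℤ/k`, for even `k` the one over `ℤ/(k - 1)` prolonged along the transversal `a = s + 1`.  For
each block `s`, decompose the pairs inside block `s` together with `∞` by the nonzero translations
of `ℤ/(2e + 1)`, and at the same time send every other block `a` to the block `σ s a` by the
translations of `ℤ/2e`.  Translations of `ℤ/(2e + 1)` that differ by `1` give a `(2e + 1)`-cycle,
and translations of `ℤ/2e` that differ by `e` give `e` transpositions, so pairing translations in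
this way yields 2-factors of cycle type `2^((k - 1) e) (2e + 1)`.  Take `e = 1` for `n ≡ 3 (mod 4)`
and `e = 2` for `n ≡ 1 (mod 4)`.
-/

open Equiv Function

lemma disjoint_prodExtendRight {α β : Type*} [DecidableEq α] {a a' : α} (h : a ≠ a')
    (τ τ' : Perm β) : (Perm.prodExtendRight a τ).Disjoint (Perm.prodExtendRight a' τ') := by
  rintro ⟨c, b⟩
  by_cases hca : c = a
  · exact Or.inr (Perm.prodExtendRight_apply_ne τ' (hca.trans_ne h) b)
  · exact Or.inl (Perm.prodExtendRight_apply_ne τ hca b)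

section CycleType

variable {α β : Type*} [Fintype α] [DecidableEq α] [Fintype β] [DecidableEq β]

lemma cycleType_viaEmbedding (τ : Perm α) (f : α ↪ β) :
    (τ.viaEmbedding f).cycleType = τ.cycleType := by
  classical
  unfold Perm.viaEmbedding
  convert! Perm.cycleType_extendDomain (Equiv.ofInjective f.1 f.2)

lemma cycleType_permCongr (e : α ≃ β) (τ : Perm α) :
    (e.permCongr τ).cycleType = τ.cycleType := by
  have h : e.permCongr τ = τ.viaEmbedding e.toEmbedding := by
    ext y
    obtain ⟨x, rfl⟩ := e.surjective y
    simpa using (τ.viaEmbedding_apply e.toEmbedding x).symm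
  rw [h, cycleType_viaEmbedding]

lemma cycleType_optionCongr (τ : Perm α) : Perm.cycleType (optionCongr τ) = τ.cycleType := by
  have h : optionCongr τ = τ.viaEmbedding Embedding.some := by
    ext1 x
    rcases x with _ | a
    · exact (τ.viaEmbedding_apply_of_notMem _ _ (by simp)).symm
    · exact (τ.viaEmbedding_apply Embedding.some a).symm
  rw [h, cycleType_viaEmbedding]

lemma cycleType_prodExtendRight (a : α) (τ : Perm β) :
    (Perm.prodExtendRight a τ).cycleType = τ.cycleType := by
  have h : Perm.prodExtendRight a τ = τ.viaEmbedding ⟨Prod.mk a, Prod.mk_right_injective a⟩ := by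
    ext1 ⟨c, b⟩
    by_cases hca : c = a
    · subst hca
      rw [Perm.prodExtendRight_apply_eq]
      exact (τ.viaEmbedding_apply ⟨Prod.mk c, Prod.mk_right_injective c⟩ b).symm
    · rw [Perm.prodExtendRight_apply_ne τ hca, Perm.viaEmbedding_apply_of_notMem]
      rintro ⟨b', h⟩
      exact hca (congrArg Prod.fst h).symm
  rw [h, cycleType_viaEmbedding]

lemma cycleType_list_prod {l : List (Perm α)} (hl : l.Pairwise Perm.Disjoint) :
    l.prod.cycleType = (l.map Perm.cycleType).sum := by
  induction l with
  | nil => simp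
  | cons τ l ih =>
    rw [List.pairwise_cons] at hl
    rw [List.prod_cons, (Perm.disjoint_prod_right l hl.1).cycleType_mul, ih hl.2, List.map_cons,
      List.sum_cons]

lemma cycleType_prodCongrRight (τ : α → Perm β) :
    Perm.cycleType (prodCongrRight τ) = ∑ a, (τ a).cycleType := by
  rw [← Perm.prod_prodExtendRight τ Finset.univ.nodup_toList (fun a => by simp),
    cycleType_list_prod, List.map_map, ← Finset.sum_map_toList]
  · simp [comp_def, cycleType_prodExtendRight]
  · exact List.pairwise_map.2 (Finset.univ.nodup_toList.imp fun h =>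
      disjoint_prodExtendRight h _ _)

lemma cycleType_of_sq_eq_one_of_forall_ne {τ : Perm α} (hsq : τ ^ 2 = 1) (hne : ∀ x, τ x ≠ x) :
    τ.cycleType = Multiset.replicate (Fintype.card α / 2) 2 := by
  have htwo := Perm.cycleType_of_pow_prime_eq_one hsq
  have hsupp : τ.support = Finset.univ := by
    ext x
    simp [hne]
  have hsum := τ.sum_cycleType
  rw [hsupp, Finset.card_univ, htwo, Multiset.sum_replicate, smul_eq_mul] at hsum
  rw [htwo, ← hsum, Nat.mul_div_cancel _ two_pos]

end CycleType

section LatinSquares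

variable {α β ι : Type*}

/-- The permutations `σ s` are the rows of a Latin square: each entry occurs once in each column.
Equivalently, their matchings decompose the complete bipartite graph on two copies of `α`. -/
def IsLatin (σ : ι → Perm α) : Prop :=
  ∀ x y, ∃! s, σ s x = y

/-- An idempotent Latin square, given by its rows: its diagonal entries are `σ s s = s`. -/
structure IsIdempotentLatin (σ : α → Perm α) : Prop where
  isLatin : IsLatin σ
  apply_self : ∀ s, σ s s = s

lemma IsIdempotentLatin.apply_eq_self_iff {σ : α → Perm α} (hσ : IsIdempotentLatin σ) {s a : α} :
    σ s a = a ↔ s = a :=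
  ⟨fun h => (hσ.isLatin a a).unique h (hσ.apply_self a), by rintro rfl; exact hσ.apply_self s⟩

lemma IsIdempotentLatin.permCongr {σ : α → Perm α} (hσ : IsIdempotentLatin σ) (e : α ≃ β) :
    IsIdempotentLatin fun s => e.permCongr (σ (e.symm s)) where
  isLatin x y := by
    obtain ⟨s, hs, hunique⟩ := hσ.isLatin (e.symm x) (e.symm y)
    refine ⟨e s, by simp [hs], fun s' hs' => ?_⟩
    rw [← hunique (e.symm s') (by simpa [eq_symm_apply] using hs'), apply_symm_apply]
  apply_self s := by simp [hσ.apply_self]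

variable {G : Type*}

lemma isLatin_addRight [AddGroup G] (g : ι ≃ G) : IsLatin fun κ => Equiv.addRight (g κ) := by
  refine fun x y => ⟨g.symm (-x + y), by simp, fun κ hκ => ?_⟩
  rw [eq_symm_apply, eq_neg_add_iff_add_eq]
  exact hκ

/-- The Latin square `(s, a) ↦ 2a - s` of an abelian group of odd order. -/
noncomputable def reflectionLatin [AddCommGroup G] (hG : (Nat.card G).Coprime 2) (s : G) : Perm G :=
  (nsmulCoprime hG).trans (Equiv.subRight s)

lemma reflectionLatin_apply [AddCommGroup G] (hG : (Nat.card G).Coprime 2) (s a : G) :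
    reflectionLatin hG s a = 2 • a - s :=
  rfl

lemma isIdempotentLatin_reflectionLatin [AddCommGroup G] (hG : (Nat.card G).Coprime 2) :
    IsIdempotentLatin (reflectionLatin hG) where
  isLatin a b := by
    simp_rw [reflectionLatin_apply]
    exact ⟨2 • a - b, by abel, fun s hs => by rw [← hs]; abel⟩
  apply_self s := by rw [reflectionLatin_apply]; abel

/-- The prolongation of a Latin square along a transversal: `t` is the column and `v` the entry of
the transversal cell in each row.  Each such entry is replaced by `none` and moved to the ends of
its row and of its column. -/
def prolongation [DecidableEq α] (σ : α → Perm α) (t v : Perm α) : Option α → Perm (Option α)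
  | none => optionCongr (v * t⁻¹)
  | some s => optionCongr (σ s) * swap (some (t s)) none

section Prolongation

variable [DecidableEq α] (σ : α → Perm α) (t v : Perm α)

lemma prolongation_none_some (a : α) :
    prolongation σ t v none (some a) = some (v (t⁻¹ a)) :=
  rfl

lemma prolongation_some_none (s : α) :
    prolongation σ t v (some s) none = some (σ s (t s)) := by
  simp [prolongation]

lemma prolongation_some_eq_none_iff {s a : α} :
    prolongation σ t v (some s) (some a) = none ↔ s = t⁻¹ a := by
  rw [Perm.eq_inv_iff_eq]
  by_cases h : t s = a
  · simp [prolongation, ← h]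
  · simp [prolongation, swap_apply_of_ne_of_ne, Ne.symm h, h]

lemma prolongation_some_eq_some_iff {s a b : α} :
    prolongation σ t v (some s) (some a) = some b ↔ t s ≠ a ∧ σ s a = b := by
  by_cases h : t s = a
  · simp [prolongation, ← h]
  · simp [prolongation, swap_apply_of_ne_of_ne, Ne.symm h, h]

end Prolongation

lemma IsLatin.prolongation [DecidableEq α] {σ : α → Perm α} (hσ : IsLatin σ) {t v : Perm α}
    (hv : ∀ s, σ s (t s) = v s) : IsLatin (prolongation σ t v) := by
  rintro (_ | a) (_ | b)
  · refine ⟨none, rfl, ?_⟩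
    rintro (_ | s) hs
    · rfl
    · simp [prolongation_some_none] at hs
  · refine ⟨some (v⁻¹ b), by simp [prolongation_some_none, hv], ?_⟩
    rintro (_ | s) hs
    · simp [_root_.prolongation] at hs
    · rw [prolongation_some_none, Option.some_inj, hv] at hs
      rw [← hs, Perm.coe_inv, symm_apply_apply]
  · refine ⟨some (t⁻¹ a), (prolongation_some_eq_none_iff σ t v).2 rfl, ?_⟩
    rintro (_ | s) hs
    · simp [prolongation_none_some] at hs
    · rw [(prolongation_some_eq_none_iff σ t v).1 hs]
  · obtain ⟨s₀, hs₀, hunique⟩ := hσ a b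
    by_cases hts : t s₀ = a
    · have hvb : v s₀ = b := by rw [← hv, hts, hs₀]
      refine ⟨none, by simp [prolongation_none_some, ← hts, hvb], ?_⟩
      rintro (_ | s) hs
      · rfl
      · obtain ⟨hne, hsb⟩ := (prolongation_some_eq_some_iff σ t v).1 hs
        exact absurd (hunique s hsb ▸ hts) hne
    · refine ⟨some s₀, (prolongation_some_eq_some_iff σ t v).2 ⟨hts, hs₀⟩, ?_⟩
      rintro (_ | s) hs
      · rw [prolongation_none_some, Option.some_inj, ← hv] at hs
        have hta : t (t⁻¹ a) = a := t.apply_symm_apply a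
        rw [hta] at hs
        exact absurd (by rw [← hunique _ hs, hta]) hts
      · rw [hunique s ((prolongation_some_eq_some_iff σ t v).1 hs).2]

lemma IsIdempotentLatin.prolongation [DecidableEq α] {σ : α → Perm α} (hσ : IsIdempotentLatin σ)
    {t v : Perm α} (ht : ∀ s, t s ≠ s) (hv : ∀ s, σ s (t s) = v s) :
    IsIdempotentLatin (prolongation σ t v) where
  isLatin := hσ.isLatin.prolongation hv
  apply_self := by
    rintro (_ | s)
    · rfl
    · exact (prolongation_some_eq_some_iff σ t v).2 ⟨ht s, hσ.apply_self s⟩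

lemma exists_isIdempotentLatin_option [AddCommGroup G] [Nontrivial G]
    (hG : (Nat.card G).Coprime 2) : ∃ σ : Option G → Perm (Option G), IsIdempotentLatin σ := by
  classical
  obtain ⟨g, hg⟩ := exists_ne (0 : G)
  refine ⟨_, (isIdempotentLatin_reflectionLatin hG).prolongation (t := Equiv.addRight g)
    (v := Equiv.addRight (2 • g)) (by simpa using hg) fun s => ?_⟩
  simp only [reflectionLatin_apply, coe_addRight]
  abel

theorem exists_isIdempotentLatin {k : ℕ} (hk : k ≠ 2) :
    ∃ σ : Fin k → Perm (Fin k), IsIdempotentLatin σ := by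
  rcases k.even_or_odd with heven | hodd
  · obtain rfl | ⟨q, rfl⟩ : k = 0 ∨ ∃ q, k = q + 1 := by cases k <;> simp
    · exact ⟨1, fun x => x.elim0, fun s => s.elim0⟩
    · have hq : Odd q := by simpa [Nat.even_add_one] using heven
      obtain ⟨r, rfl⟩ : ∃ r, q = r + 2 := ⟨q - 2, by obtain ⟨m, rfl⟩ := hq; omega⟩
      obtain ⟨σ, hσ⟩ := exists_isIdempotentLatin_option (G := Fin (r + 2))
        (by simpa using hq)
      exact ⟨_, hσ.permCongr (finSuccEquiv _).symm⟩
  · have : NeZero k := ⟨hodd.pos.ne'⟩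
    exact ⟨_, isIdempotentLatin_reflectionLatin (by simpa using hodd)⟩

end LatinSquares

section CrownFactorizations

variable {J J' X Y : Type*}

/-- The matchings of the permutations `Φ j` decompose the crown graph on two copies of `X`, that is,
the complete bipartite graph minus the diagonal matching. -/
structure IsCrownFactorization (Φ : J → Perm X) : Prop where
  apply_ne : ∀ j x, Φ j x ≠ x
  existsUnique : ∀ x y, y ≠ x → ∃! j, Φ j x = y

lemma IsCrownFactorization.permCongr {Φ : J → Perm X} (hΦ : IsCrownFactorization Φ) (g : J' ≃ J)
    (e : X ≃ Y) : IsCrownFactorization fun j => e.permCongr (Φ (g j)) where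
  apply_ne j y := by
    rw [permCongr_apply, ne_eq, ← eq_symm_apply]
    exact hΦ.apply_ne _ _
  existsUnique x y hxy := by
    obtain ⟨j, hj, hunique⟩ := hΦ.existsUnique (e.symm x) (e.symm y) (by simpa using hxy)
    refine ⟨g.symm j, by simp [hj], fun j' hj' => ?_⟩
    rw [eq_symm_apply]
    exact hunique (g j') (by simpa [eq_symm_apply] using hj')

lemma isCrownFactorization_addRight {G : Type*} [AddGroup G] (f : J ≃ {g : G // g ≠ 0}) :
    IsCrownFactorization fun j => Equiv.addRight (f j : G) where
  apply_ne j x := by simpa using (f j).2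
  existsUnique x y hxy := by
    refine ⟨f.symm ⟨-x + y, by simpa [neg_add_eq_zero] using hxy.symm⟩, by simp, fun j hj => ?_⟩
    rw [eq_symm_apply, Subtype.ext_iff, eq_neg_add_iff_add_eq]
    exact hj

/-- A decomposition of the crown graph on two copies of `X` into the 2-factors formed by the
matchings of `Φ (j, true)` and `Φ (j, false)`, all with component structure `c`. -/
structure IsCrownTwoFactorization [Fintype X] [DecidableEq X] (Φ : J × Bool → Perm X)
    (c : Multiset ℕ) : Prop extends IsCrownFactorization Φ where
  cycleType_eq : ∀ j, ((Φ (j, false))⁻¹ * Φ (j, true)).cycleType = c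

variable [Fintype X] [DecidableEq X] [Fintype Y] [DecidableEq Y]

lemma IsCrownTwoFactorization.permCongr {Φ : J × Bool → Perm X} {c : Multiset ℕ}
    (hΦ : IsCrownTwoFactorization Φ c) (g : J' ≃ J) (e : X ≃ Y) :
    IsCrownTwoFactorization (fun p : J' × Bool => e.permCongr (Φ (g p.1, p.2))) c where
  toIsCrownFactorization := hΦ.toIsCrownFactorization.permCongr (g.prodCongr (Equiv.refl Bool)) e
  cycleType_eq j := by
    rw [← hΦ.cycleType_eq (g j), ← cycleType_permCongr e]
    simp only [← permCongrHom_coe, map_mul, map_inv]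

lemma IsCrownTwoFactorization.exists_pair {Φ : J × Bool → Perm X} {c : Multiset ℕ}
    (hΦ : IsCrownTwoFactorization Φ c) :
    ∃ π ρ : J → Perm X,
      (∀ j i, π j i ≠ i ∧ ρ j i ≠ i ∧ π j i ≠ ρ j i) ∧
      (∀ i k, k ≠ i → ∃! jb : J × Bool, (if jb.2 then π jb.1 i else ρ jb.1 i) = k) ∧
      ∀ j, ((ρ j)⁻¹ * π j).cycleType = c := by
  refine ⟨fun j => Φ (j, true), fun j => Φ (j, false), fun j i => ⟨hΦ.apply_ne _ i,
    hΦ.apply_ne _ i, fun h => ?_⟩, fun i k hki => ?_, hΦ.cycleType_eq⟩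
  · have := (hΦ.existsUnique i _ (hΦ.apply_ne (j, false) i)).unique h rfl
    simp at this
  · have hite : ∀ jb : J × Bool,
        (if jb.2 then Φ (jb.1, true) i else Φ (jb.1, false) i) = Φ jb i := by
      rintro ⟨j, _ | _⟩ <;> rfl
    simpa only [hite] using hΦ.existsUnique i k hki

end CrownFactorizations

section Translations

lemma inv_addRight_mul_addRight {G : Type*} [AddGroup G] (a b : G) :
    (Equiv.addRight a)⁻¹ * Equiv.addRight b = Equiv.addRight (b - a) := by
  ext x
  simp [sub_eq_add_neg, add_assoc]

lemma exists_isCrownTwoFactorization_cycle (e : ℕ) :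
    ∃ W : Fin e × Bool → Perm (Fin (e * 2 + 1)), IsCrownTwoFactorization W {2 * e + 1} := by
  let f : Fin e × Bool ≃ {x : Fin (e * 2 + 1) // x ≠ 0} :=
    (((Equiv.refl _).prodCongr finTwoEquiv.symm).trans finProdFinEquiv).trans (finSuccAboveEquiv 0)
  refine ⟨_, isCrownFactorization_addRight f, fun j => ?_⟩
  have hf : (f (j, true) : Fin (e * 2 + 1)) - f (j, false) = 1 := by
    have htrue : ((f (j, true) : Fin (e * 2 + 1)) : ℕ) = 1 + 2 * j + 1 := rfl
    have hfalse : ((f (j, false) : Fin (e * 2 + 1)) : ℕ) = 0 + 2 * j + 1 := rfl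
    rw [sub_eq_iff_eq_add', Fin.ext_iff, Fin.val_add, Fin.val_one', Nat.add_mod_mod, htrue, hfalse,
      Nat.mod_eq_of_lt (by omega)]
    omega
  have hrotate : Equiv.addRight (1 : Fin (e * 2 + 1)) = finRotate (e * 2 + 1) := by
    ext1 i
    rw [finRotate_apply, coe_addRight]
  rw [inv_addRight_mul_addRight, hf, hrotate,
    cycleType_finRotate_of_le (by have := j.pos; omega), mul_comm]

lemma exists_isLatin_transpositions (e : ℕ) [NeZero e] :
    ∃ w : Fin e × Bool → Perm (Fin (2 * e)), IsLatin w ∧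
      ∀ j, ((w (j, false))⁻¹ * w (j, true)).cycleType = Multiset.replicate e 2 := by
  let g : Fin e × Bool ≃ Fin (2 * e) :=
    ((Equiv.prodComm _ _).trans (finTwoEquiv.symm.prodCongr (Equiv.refl _))).trans finProdFinEquiv
  refine ⟨_, isLatin_addRight g, fun j => ?_⟩
  have he := NeZero.pos e
  let h : Fin (2 * e) := ⟨e, by omega⟩
  have hne : h ≠ 0 := by simp [h, Fin.ext_iff, he.ne']
  have htwo : h + h = 0 := by simp [h, Fin.ext_iff, Fin.val_add, two_mul]
  have hg : g (j, true) - g (j, false) = h := by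
    have htrue : (g (j, true) : ℕ) = j + e * 1 := rfl
    have hfalse : (g (j, false) : ℕ) = j + e * 0 := rfl
    have hval : (h : ℕ) = e := rfl
    rw [sub_eq_iff_eq_add', Fin.ext_iff, Fin.val_add, htrue, hfalse, hval,
      Nat.mod_eq_of_lt (by omega)]
    omega
  rw [inv_addRight_mul_addRight, hg, cycleType_of_sq_eq_one_of_forall_ne]
  · simp
  · ext1 x
    simp [pow_two, add_assoc, htwo]
  · simp [hne]

end Translations

section CrownProduct

variable {I B K : Type*}

/-- The inclusion of block `s`, together with the point `none` common to all blocks. -/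
def blockEmbedding (s : I) : Option B ↪ Option (I × B) :=
  (⟨Prod.mk s, Prod.mk_right_injective s⟩ : B ↪ I × B).optionMap

@[simp]
lemma blockEmbedding_none (s : I) : blockEmbedding s (none : Option B) = none :=
  rfl

@[simp]
lemma blockEmbedding_some (s : I) (b : B) : blockEmbedding s (some b) = some (s, b) :=
  rfl

lemma notMem_range_blockEmbedding {s a : I} (h : a ≠ s) (b : B) :
    some (a, b) ∉ Set.range (blockEmbedding (B := B) s) := by
  rintro ⟨_ | _, h'⟩ <;> simp_all

lemma exists_blockEmbedding_or_ne {x y : Option (I × B)} (hxy : y ≠ x) :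
    (∃ s u v, x = blockEmbedding s u ∧ y = blockEmbedding s v) ∨
      ∃ a b c d, x = some (a, b) ∧ y = some (c, d) ∧ c ≠ a := by
  rcases x with _ | ⟨a, b⟩ <;> rcases y with _ | ⟨c, d⟩
  · exact absurd rfl hxy
  · exact Or.inl ⟨c, none, some d, rfl, rfl⟩
  · exact Or.inl ⟨a, some b, none, rfl, rfl⟩
  · rcases eq_or_ne c a with rfl | hca
    · exact Or.inl ⟨c, some b, some d, rfl, rfl⟩
    · exact Or.inr ⟨a, b, c, d, rfl, rfl, hca⟩

variable [DecidableEq I]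

/-- The permutation acting as `q` on each block other than `s`, and trivially elsewhere. -/
def offBlock (s : I) (q : Perm B) : Perm (Option (I × B)) :=
  optionCongr (prodCongrRight fun a => if a = s then 1 else q)

lemma offBlock_blockEmbedding (s : I) (q : Perm B) (z : Option B) :
    offBlock s q (blockEmbedding s z) = blockEmbedding s z := by
  rcases z with _ | b <;> simp [offBlock]

lemma offBlock_of_ne {s a : I} (h : a ≠ s) (q : Perm B) (b : B) :
    offBlock s q (some (a, b)) = some (a, q b) := by
  simp [offBlock, h]

lemma offBlock_inv_mul (s : I) (q q' : Perm B) :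
    (offBlock s q)⁻¹ * offBlock s q' = offBlock s (q⁻¹ * q') := by
  rw [inv_mul_eq_iff_eq_mul]
  ext1 (_ | ⟨a, b⟩)
  · simp [offBlock]
  · by_cases has : a = s <;> simp [offBlock, has]

lemma disjoint_offBlock_viaEmbedding (s : I) (q : Perm B) (Q : Perm (Option B)) :
    (offBlock s q).Disjoint (Q.viaEmbedding (blockEmbedding s)) := by
  rintro (_ | ⟨a, b⟩)
  · exact Or.inl (offBlock_blockEmbedding s q none)
  · by_cases has : a = s
    · subst has
      exact Or.inl (offBlock_blockEmbedding a q (some b))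
    · exact Or.inr (Q.viaEmbedding_apply_of_notMem _ _ (notMem_range_blockEmbedding has b))

lemma cycleType_offBlock [Fintype I] [Fintype B] [DecidableEq B] (s : I) (q : Perm B) :
    (offBlock s q).cycleType = (Fintype.card I - 1) • q.cycleType := by
  have hblock : ∀ a, (if a = s then 1 else q).cycleType = if a = s then 0 else q.cycleType :=
    fun a => by split_ifs <;> simp
  rw [offBlock, cycleType_optionCongr, cycleType_prodCongrRight]
  simp [hblock, Finset.sum_ite, Finset.filter_ne', Finset.card_univ]

/-- The product of a Latin square `σ` on blocks with families `W` and `w`: the permutation indexed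
by `(s, κ)` acts as `W κ` on block `s` together with `none`, and maps every other block `a` to the
block `σ s a` by `w κ`. -/
noncomputable def crownProduct (σ : I → Perm I) (W : K → Perm (Option B)) (w : K → Perm B)
    (p : I × K) : Perm (Option (I × B)) :=
  optionCongr ((σ p.1).prodCongr (Equiv.refl B)) *
    (offBlock p.1 (w p.2) * (W p.2).viaEmbedding (blockEmbedding p.1))

variable {σ : I → Perm I} {W : K → Perm (Option B)} {w : K → Perm B}

lemma crownProduct_blockEmbedding (hσ : IsIdempotentLatin σ) (s : I) (κ : K) (z : Option B) :
    crownProduct σ W w (s, κ) (blockEmbedding s z) = blockEmbedding s (W κ z) := by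
  simp only [crownProduct, Perm.mul_apply, Perm.viaEmbedding_apply, offBlock_blockEmbedding]
  rcases W κ z with _ | b <;> simp [hσ.apply_self]

lemma crownProduct_of_ne {s a : I} (h : a ≠ s) (κ : K) (b : B) :
    crownProduct σ W w (s, κ) (some (a, b)) = some (σ s a, w κ b) := by
  simp [crownProduct, Perm.viaEmbedding_apply_of_notMem _ _ _ (notMem_range_blockEmbedding h b),
    offBlock_of_ne h]

lemma crownProduct_blockEmbedding_eq_iff (hσ : IsIdempotentLatin σ) {s : I} {u v : Option B}
    (huv : v ≠ u) (p : I × K) :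
    crownProduct σ W w p (blockEmbedding s u) = blockEmbedding s v ↔ p.1 = s ∧ W p.2 u = v := by
  obtain ⟨s', κ⟩ := p
  by_cases hs : s' = s
  · subst hs
    simp [crownProduct_blockEmbedding hσ]
  · refine iff_of_false (fun h => hs ?_) (fun h => hs h.1)
    rcases u with _ | b
    · rw [blockEmbedding_none, ← blockEmbedding_none s', crownProduct_blockEmbedding hσ] at h
      rcases v with _ | d
      · exact absurd rfl huv
      · rcases hW : W κ none with _ | d' <;> simp_all
    · rw [blockEmbedding_some, crownProduct_of_ne (Ne.symm hs)] at h
      rcases v with _ | d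
      · simp at h
      · rw [blockEmbedding_some, Option.some_inj, Prod.mk.injEq] at h
        exact hσ.apply_eq_self_iff.1 h.1

lemma crownProduct_eq_iff_of_ne (hσ : IsIdempotentLatin σ) {a c : I} (hca : c ≠ a) (b d : B)
    (p : I × K) :
    crownProduct σ W w p (some (a, b)) = some (c, d) ↔ σ p.1 a = c ∧ w p.2 b = d := by
  obtain ⟨s, κ⟩ := p
  by_cases has : a = s
  · subst has
    refine iff_of_false (fun h => ?_) (fun h => hca (h.1 ▸ hσ.apply_self a))
    rw [← blockEmbedding_some, crownProduct_blockEmbedding hσ] at h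
    rcases hW : W κ (some b) with _ | b' <;> simp_all
  · simp [crownProduct_of_ne has]

lemma isCrownFactorization_crownProduct (hσ : IsIdempotentLatin σ) (hW : IsCrownFactorization W)
    (hw : IsLatin w) : IsCrownFactorization (crownProduct σ W w) where
  apply_ne := by
    rintro ⟨s, κ⟩ (_ | ⟨a, b⟩) h
    · rw [← blockEmbedding_none s, crownProduct_blockEmbedding hσ] at h
      exact hW.apply_ne κ none ((blockEmbedding s).injective h)
    · by_cases has : a = s
      · subst has
        rw [← blockEmbedding_some, crownProduct_blockEmbedding hσ] at h
        exact hW.apply_ne κ (some b) ((blockEmbedding a).injective h)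
      · rw [crownProduct_of_ne has, Option.some_inj, Prod.mk.injEq] at h
        exact has (hσ.apply_eq_self_iff.1 h.1).symm
  existsUnique x y hxy := by
    rcases exists_blockEmbedding_or_ne hxy with ⟨s, u, v, rfl, rfl⟩ | ⟨a, b, c, d, rfl, rfl, hca⟩
    · have huv : v ≠ u := fun h => hxy (h ▸ rfl)
      obtain ⟨κ, hκ, hunique⟩ := hW.existsUnique u v huv
      simp only [crownProduct_blockEmbedding_eq_iff hσ huv]
      exact ⟨(s, κ), ⟨rfl, hκ⟩, fun p hp => Prod.ext hp.1 (hunique p.2 hp.2)⟩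
    · obtain ⟨s, hs, hs_unique⟩ := hσ.isLatin a c
      obtain ⟨κ, hκ, hκ_unique⟩ := hw b d
      simp only [crownProduct_eq_iff_of_ne hσ hca]
      exact ⟨(s, κ), ⟨hs, hκ⟩, fun p hp => Prod.ext (hs_unique _ hp.1) (hκ_unique _ hp.2)⟩

lemma cycleType_crownProduct_inv_mul [Fintype I] [Fintype B] [DecidableEq B] (s : I) (κ κ' : K) :
    ((crownProduct σ W w (s, κ))⁻¹ * crownProduct σ W w (s, κ')).cycleType =
      (Fintype.card I - 1) • ((w κ)⁻¹ * w κ').cycleType + ((W κ)⁻¹ * W κ').cycleType := by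
  have hfactor : (crownProduct σ W w (s, κ))⁻¹ * crownProduct σ W w (s, κ') =
      offBlock s ((w κ)⁻¹ * w κ') * ((W κ)⁻¹ * W κ').viaEmbedding (blockEmbedding s) := by
    have hcomm := (disjoint_offBlock_viaEmbedding s ((w κ)⁻¹ * w κ') (W κ)⁻¹).commute
    simp only [crownProduct, ← Perm.viaEmbeddingHom_apply, map_mul, map_inv] at hcomm ⊢
    rw [← mul_assoc (offBlock s _), hcomm.eq, ← offBlock_inv_mul]
    group
  rw [hfactor, (disjoint_offBlock_viaEmbedding s _ _).cycleType_mul, cycleType_offBlock,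
    cycleType_viaEmbedding]

lemma IsCrownTwoFactorization.crownProduct [Fintype I] [Fintype B] [DecidableEq B] {J : Type*}
    {W : J × Bool → Perm (Option B)} {w : J × Bool → Perm B} {c c' : Multiset ℕ}
    (hW : IsCrownTwoFactorization W c) (hσ : IsIdempotentLatin σ) (hw : IsLatin w)
    (hc' : ∀ j, ((w (j, false))⁻¹ * w (j, true)).cycleType = c') :
    IsCrownTwoFactorization (fun p : (I × J) × Bool => crownProduct σ W w (p.1.1, p.1.2, p.2))
      ((Fintype.card I - 1) • c' + c) where
  toIsCrownFactorization :=
    (isCrownFactorization_crownProduct hσ hW.toIsCrownFactorization hw).permCongr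
      (Equiv.prodAssoc I J Bool) (Equiv.refl _)
  cycleType_eq p := by rw [cycleType_crownProduct_inv_mul, hc', hW.cycleType_eq]

end CrownProduct

theorem exists_isCrownTwoFactorization {m n : ℕ} (k e : ℕ) [NeZero e] (hk : k ≠ 2)
    (hm : m = k * e) (hn : n = 2 * m + 1) :
    ∃ Φ : Fin m × Bool → Perm (Fin n),
      IsCrownTwoFactorization Φ (Multiset.replicate ((k - 1) * e) 2 + {2 * e + 1}) := by
  obtain ⟨σ, hσ⟩ := exists_isIdempotentLatin hk
  obtain ⟨W, hW⟩ := exists_isCrownTwoFactorization_cycle e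
  obtain ⟨w, hw, hwc⟩ := exists_isLatin_transpositions e
  have hcard : Fintype.card (Fin (e * 2 + 1)) = Fintype.card (Option (Fin (2 * e))) := by
    simp [mul_comm]
  have hΦ := (hW.permCongr (Equiv.refl _) (Fintype.equivOfCardEq hcard)).crownProduct hσ hw hwc
  rw [Fintype.card_fin, Multiset.nsmul_replicate] at hΦ
  have hindex : Fintype.card (Fin m) = Fintype.card (Fin k × Fin e) := by simp [hm]
  have hpoint : Fintype.card (Option (Fin k × Fin (2 * e))) = Fintype.card (Fin n) := by
    simp [hn, hm, mul_left_comm]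
  exact ⟨_, hΦ.permCongr (Fintype.equivOfCardEq hindex) (Fintype.equivOfCardEq hpoint)⟩

theorem crown_two_factorization_general (n : ℕ) (hodd : Odd n) (hn : n ≠ 9) :
    ∃ π ρ : Fin ((n - 1) / 2) → Equiv.Perm (Fin n),
      (∀ j i, π j i ≠ i ∧ ρ j i ≠ i ∧ π j i ≠ ρ j i) ∧
      (∀ i k : Fin n, k ≠ i →
        ∃! jb : Fin ((n - 1) / 2) × Bool,
          (if jb.2 then π jb.1 i else ρ jb.1 i) = k) ∧
      (∀ j, ((ρ j)⁻¹ * π j).cycleType =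
        if n % 4 = 3 then Multiset.replicate ((n - 3) / 2) 2 + {3}
        else Multiset.replicate ((n - 5) / 2) 2 + {5}) := by
  obtain ⟨m, rfl⟩ := hodd
  split_ifs with h
  · obtain ⟨Φ, hΦ⟩ := exists_isCrownTwoFactorization (m := (2 * m + 1 - 1) / 2) (n := 2 * m + 1)
      m 1 (by omega) (by omega) (by omega)
    rw [show (2 * m + 1 - 3) / 2 = (m - 1) * 1 by omega]
    exact hΦ.exists_pair
  · obtain ⟨Φ, hΦ⟩ := exists_isCrownTwoFactorization (m := (2 * m + 1 - 1) / 2) (n := 2 * m + 1)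
      (m / 2) 2 (by omega) (by omega) (by omega)
    rw [show (2 * m + 1 - 5) / 2 = (m / 2 - 1) * 2 by omega]
    exact hΦ.exists_pair

theorem crown_two_factorization :
    ∃ n₀ : ℕ, ∀ n : ℕ, n₀ ≤ n → Odd n →
    ∃ π ρ : Fin ((n - 1) / 2) → Equiv.Perm (Fin n),
      (∀ j i, π j i ≠ i ∧ ρ j i ≠ i ∧ π j i ≠ ρ j i) ∧
      (∀ i k : Fin n, k ≠ i →
        ∃! jb : Fin ((n - 1) / 2) × Bool,
          (if jb.2 then π jb.1 i else ρ jb.1 i) = k) ∧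
      (∀ j, ((ρ j)⁻¹ * π j).cycleType =
        if n % 4 = 3 then Multiset.replicate ((n - 3) / 2) 2 + {3}
        else Multiset.replicate ((n - 5) / 2) 2 + {5}) :=
  ⟨10, fun n hn hodd => crown_two_factorization_general n hodd (by omega)⟩
end

section
/- Let n ≥ 1, let M be a signing of K_{n,n}, and let η > 0 be real. If s(M) ≥ η·n⁴, then there exists a permutation π of Fin n with |∑ i, M i (π i)| ≥ η·n/2; that is, K_{n,n} contains a perfect matching of discrepancy at least η/2. -/
open Finset

/-- `M` is a signing of `K_{n,n}`: every entry is `+1` or `-1`. -/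
def IsSigning (n : ℕ) (M : Fin n → Fin n → ℤ) : Prop :=
  ∀ i j, M i j = 1 ∨ M i j = -1

/-- `s(M)`: the number of switchers of `M`. -/
def switcherCount (n : ℕ) (M : Fin n → Fin n → ℤ) : ℕ :=
  (univ.filter fun p : Fin n × Fin n × Fin n × Fin n =>
    p.1 < p.2.1 ∧ p.2.2.1 < p.2.2.2 ∧
      M p.1 p.2.2.1 + M p.2.1 p.2.2.2 ≠ M p.1 p.2.2.2 + M p.2.1 p.2.2.1).card

/-!
Redirecting a perfect matching along a switcher on rows `a, c` and columns `b, d` changes its weight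
by the gap of the switcher. A set of `2 t` rows and `2 t` columns meets at most `2 t n³` quadruples,
so while `2 t n³ < s(M)` some switcher avoids everything touched in `t` earlier rounds, and it can be
exchanged, starting from its heavier diagonal, without disturbing them. If all gaps are at least `δ`,
then after `t = ⌈η n / 2⌉` rounds there are two perfect matchings whose weights differ by at least
`t δ`, so one of them has weight at least `t δ / 2` in absolute value. For a signing the gaps are
even, so `δ = 2` is allowed.
-/

variable {ι κ G : Type*}

/-- The weight difference between the two diagonals of the `2 × 2` submatrix of `M` on rows `a, c`
and columns `b, d`; a switcher is a quadruple of nonzero gap. -/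
def switchGap [AddCommGroup G] (M : ι → κ → G) (a c : ι) (b d : κ) : G :=
  M a b + M c d - (M a d + M c b)

theorem switchGap_swap_right [AddCommGroup G] (M : ι → κ → G) (a c : ι) (b d : κ) :
    switchGap M a c d b = -switchGap M a c b d :=
  (neg_sub _ _).symm

section Counting

variable [Fintype ι] [LinearOrder ι] [Fintype κ] [LinearOrder κ]
  [AddCommGroup G] [LinearOrder G]

/-- The quadruples `((a, c), (b, d))` with `a < c`, `b < d` whose gap is at least `δ` in absolute
value: the quantitative version of switchers for matrices that need not be signings. -/
def wideSwitchers (M : ι → κ → G) (δ : G) : Finset ((ι × ι) × (κ × κ)) :=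
  {q | q.1.1 < q.1.2 ∧ q.2.1 < q.2.2 ∧ δ ≤ |switchGap M q.1.1 q.1.2 q.2.1 q.2.2|}

theorem mem_wideSwitchers {M : ι → κ → G} {δ : G} {a c : ι} {b d : κ} :
    ((a, c), (b, d)) ∈ wideSwitchers M δ ↔ a < c ∧ b < d ∧ δ ≤ |switchGap M a c b d| := by
  simp [wideSwitchers]

theorem card_filter_lt_and_mem_or_mem_le (R : Finset ι) :
    #{p : ι × ι | p.1 < p.2 ∧ (p.1 ∈ R ∨ p.2 ∈ R)} ≤ #R * Fintype.card ι := by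
  rw [← card_univ, ← card_product]
  -- The map is injective on increasing pairs, since no two of them are swaps of each other.
  refine card_le_card_of_injOn (fun p => if p.1 ∈ R then p else p.swap) ?_ ?_
  · intro p hp
    grind
  · rintro ⟨a, c⟩ hp ⟨a', c'⟩ hq h
    grind

theorem two_mul_card_filter_lt_le :
    2 * #{p : ι × ι | p.1 < p.2} ≤ Fintype.card ι ^ 2 := by
  rw [Fintype.card_product_filter_lt, Nat.choose_two_right, sq]
  exact (Nat.mul_div_le _ 2).trans (Nat.mul_le_mul_left _ (Nat.sub_le _ 1))

theorem exists_mem_wideSwitchers_avoiding {M : ι → κ → G} {δ : G} {R : Finset ι} {C : Finset κ}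
    (h : #R * Fintype.card ι * Fintype.card κ ^ 2 + Fintype.card ι ^ 2 * (#C * Fintype.card κ)
      < 2 * #(wideSwitchers M δ)) :
    ∃ a c b d, ((a, c), (b, d)) ∈ wideSwitchers M δ ∧ a ∉ R ∧ c ∉ R ∧ b ∉ C ∧ d ∉ C := by
  by_contra! hmeet
  let rows : Finset (ι × ι) := {p | p.1 < p.2}
  let cols : Finset (κ × κ) := {p | p.1 < p.2}
  let rowsMeeting : Finset (ι × ι) := {p | p.1 < p.2 ∧ (p.1 ∈ R ∨ p.2 ∈ R)}
  let colsMeeting : Finset (κ × κ) := {p | p.1 < p.2 ∧ (p.1 ∈ C ∨ p.2 ∈ C)}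
  have hsub : wideSwitchers M δ ⊆ rowsMeeting ×ˢ cols ∪ rows ×ˢ colsMeeting := by
    rintro ⟨⟨a, c⟩, b, d⟩ hq
    have hRC := hmeet a c b d hq
    obtain ⟨hac, hbd, -⟩ := mem_wideSwitchers.1 hq
    simp only [rows, cols, rowsMeeting, colsMeeting, mem_union, mem_product, mem_filter_univ]
    tauto
  refine h.not_ge ?_
  calc 2 * #(wideSwitchers M δ)
      ≤ 2 * (#rowsMeeting * #cols + #rows * #colsMeeting) := by
        rw [← card_product, ← card_product]
        exact Nat.mul_le_mul_left 2 ((card_le_card hsub).trans (card_union_le _ _))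
    _ = #rowsMeeting * (2 * #cols) + 2 * #rows * #colsMeeting := by ring
    _ ≤ _ := by
        gcongr
        · exact card_filter_lt_and_mem_or_mem_le R
        · exact two_mul_card_filter_lt_le
        · exact two_mul_card_filter_lt_le
        · exact card_filter_lt_and_mem_or_mem_le C

end Counting

section Exchange

theorem exists_equiv_apply_eq_of_notMem (p : ι ≃ κ) {R : Set ι} {a : ι} {b : κ}
    (ha : a ∉ R) (hb : p.symm b ∉ R) :
    ∃ p' : ι ≃ κ, p' a = b ∧ ∀ i ∈ R, p' i = p i := by
  classical
  refine ⟨p.setValue a b, p.setValue_eq a b, fun i hi => congrArg p ?_⟩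
  exact Equiv.swap_apply_of_ne_of_ne (ne_of_mem_of_not_mem hi ha) (ne_of_mem_of_not_mem hi hb)

theorem exists_equiv_apply_eq_apply_eq_of_notMem (p : ι ≃ κ) {R : Set ι} {a c : ι} {b d : κ}
    (hac : a ≠ c) (hbd : b ≠ d) (ha : a ∉ R) (hc : c ∉ R) (hb : p.symm b ∉ R)
    (hd : p.symm d ∉ R) :
    ∃ p' : ι ≃ κ, p' a = b ∧ p' c = d ∧ ∀ i ∈ R, p' i = p i := by
  obtain ⟨p₁, hp₁a, hp₁R⟩ := exists_equiv_apply_eq_of_notMem p ha hb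
  have hc' : c ∉ insert a R := by simp [hac.symm, hc]
  have hd' : p₁.symm d ∉ insert a R := by
    rintro (hda | hdR)
    · rw [Equiv.symm_apply_eq, hp₁a] at hda
      exact hbd hda.symm
    · have hpd : d = p (p₁.symm d) := by rw [← hp₁R _ hdR, Equiv.apply_symm_apply]
      rw [← p.symm_apply_eq.2 hpd] at hdR
      exact hd hdR
  obtain ⟨p₂, hp₂c, hp₂R⟩ := exists_equiv_apply_eq_of_notMem p₁ hc' hd'
  refine ⟨p₂, (hp₂R a (Set.mem_insert a R)).trans hp₁a, hp₂c, fun i hi => ?_⟩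
  rw [hp₂R i (Set.mem_insert_of_mem a hi), hp₁R i hi]

variable [Fintype ι] [AddCommGroup G]

/-- The weight of the perfect matching `p` minus that of the perfect matching `p ∘ σ`, obtained
from `p` by permuting the rows along `σ`. -/
def exchangeGain (M : ι → κ → G) (p : ι ≃ κ) (σ : Equiv.Perm ι) : G :=
  ∑ i, (M i (p i) - M i (p (σ i)))

theorem exchangeGain_eq_sum_sub_sum (M : ι → κ → G) (p : ι ≃ κ) (σ : Equiv.Perm ι) :
    exchangeGain M p σ = ∑ i, M i (p i) - ∑ i, M i ((σ.trans p) i) :=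
  sum_sub_distrib _ _

theorem exchangeGain_one (M : ι → κ → G) (p : ι ≃ κ) : exchangeGain M p 1 = 0 := by
  simp [exchangeGain]

theorem exchangeGain_mul_of_disjoint (M : ι → κ → G) (p : ι ≃ κ) {σ τ : Equiv.Perm ι}
    (h : σ.Disjoint τ) :
    exchangeGain M p (σ * τ) = exchangeGain M p σ + exchangeGain M p τ := by
  rw [exchangeGain, exchangeGain, exchangeGain, ← sum_add_distrib]
  refine sum_congr rfl fun i _ => ?_
  rcases h i with hσ | hτ
  · rw [h.commute.eq, Equiv.Perm.mul_apply, hσ, sub_self, zero_add]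
  · rw [Equiv.Perm.mul_apply, hτ, sub_self, add_zero]

variable [DecidableEq ι]

theorem exchangeGain_congr (M : ι → κ → G) {p p' : ι ≃ κ} {σ : Equiv.Perm ι}
    (h : ∀ i ∈ σ.support, p' i = p i) : exchangeGain M p' σ = exchangeGain M p σ := by
  refine sum_congr rfl fun i _ => ?_
  by_cases hi : i ∈ σ.support
  · rw [h i hi, h (σ i) (Equiv.Perm.apply_mem_support.2 hi)]
  · rw [Equiv.Perm.notMem_support.1 hi, sub_self, sub_self]

theorem exchangeGain_swap (M : ι → κ → G) (p : ι ≃ κ) {a c : ι} (hac : a ≠ c) :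
    exchangeGain M p (Equiv.swap a c) = switchGap M a c (p a) (p c) := by
  rw [exchangeGain, ← sum_subset (subset_univ {a, c}), sum_pair hac, Equiv.swap_apply_left,
    Equiv.swap_apply_right, switchGap]
  · abel
  · intro i _ hi
    have hi' : i ≠ a ∧ i ≠ c := by simpa using hi
    rw [Equiv.swap_apply_of_ne_of_ne hi'.1 hi'.2, sub_self]

theorem exists_exchangeGain_eq_add_switchGap (M : ι → κ → G) (p : ι ≃ κ)
    (σ : Equiv.Perm ι) {a c : ι} {b d : κ} (hac : a ≠ c) (hbd : b ≠ d) (ha : a ∉ σ.support)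
    (hc : c ∉ σ.support) (hb : p.symm b ∉ σ.support) (hd : p.symm d ∉ σ.support) :
    ∃ (p' : ι ≃ κ) (σ' : Equiv.Perm ι), #σ'.support = #σ.support + 2 ∧
      exchangeGain M p' σ' = exchangeGain M p σ + switchGap M a c b d := by
  obtain ⟨p', hp'a, hp'c, hp'σ⟩ :=
    exists_equiv_apply_eq_apply_eq_of_notMem p (R := σ.support) hac hbd ha hc hb hd
  have hdisj : σ.Disjoint (Equiv.swap a c) := by
    rw [Equiv.Perm.disjoint_iff_disjoint_support, Equiv.Perm.support_swap hac]
    simp only [disjoint_insert_right, disjoint_singleton_right]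
    exact ⟨ha, hc⟩
  refine ⟨p', σ * Equiv.swap a c, ?_, ?_⟩
  · rw [hdisj.card_support_mul, Equiv.Perm.card_support_swap hac]
  · rw [exchangeGain_mul_of_disjoint M p' hdisj, exchangeGain_congr M hp'σ,
      exchangeGain_swap M p' hac, hp'a, hp'c]

end Exchange

section Greedy

variable [Fintype ι] [LinearOrder ι] [Fintype κ] [LinearOrder κ]
  [AddCommGroup G] [LinearOrder G] [IsOrderedAddMonoid G]

theorem exists_add_le_exchangeGain (M : ι → κ → G) {δ : G} (p : ι ≃ κ) (σ : Equiv.Perm ι)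
    (h : #σ.support * Fintype.card ι ^ 3 < #(wideSwitchers M δ)) :
    ∃ (p' : ι ≃ κ) (σ' : Equiv.Perm ι), #σ'.support = #σ.support + 2 ∧
      exchangeGain M p σ + δ ≤ exchangeGain M p' σ' := by
  have hcount : #σ.support * Fintype.card ι * Fintype.card κ ^ 2 + Fintype.card ι ^ 2 *
      (#(σ.support.map p.toEmbedding) * Fintype.card κ) < 2 * #(wideSwitchers M δ) := by
    rw [card_map, ← Fintype.card_congr p]
    linarith
  obtain ⟨a, c, b, d, hswitch, ha, hc, hb, hd⟩ := exists_mem_wideSwitchers_avoiding hcount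
  rw [mem_map_equiv] at hb hd
  obtain ⟨hac, hbd, hδ⟩ := mem_wideSwitchers.1 hswitch
  rcases le_abs.1 hδ with hgap | hgap
  · obtain ⟨p', σ', hσ', hgain⟩ :=
      exists_exchangeGain_eq_add_switchGap M p σ hac.ne hbd.ne ha hc hb hd
    exact ⟨p', σ', hσ', hgain ▸ add_le_add_right hgap _⟩
  · obtain ⟨p', σ', hσ', hgain⟩ :=
      exists_exchangeGain_eq_add_switchGap M p σ hac.ne hbd.ne' ha hc hd hb
    rw [← switchGap_swap_right] at hgap
    exact ⟨p', σ', hσ', hgain ▸ add_le_add_right hgap _⟩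

theorem exists_nsmul_le_exchangeGain (e : ι ≃ κ) (M : ι → κ → G) {δ : G} (t : ℕ)
    (h : ∀ u < t, 2 * u * Fintype.card ι ^ 3 < #(wideSwitchers M δ)) :
    ∃ (p : ι ≃ κ) (σ : Equiv.Perm ι), #σ.support = 2 * t ∧ t • δ ≤ exchangeGain M p σ := by
  induction t with
  | zero => exact ⟨e, 1, by simp, by simp [exchangeGain_one]⟩
  | succ t ih =>
    obtain ⟨p, σ, hσ, hgain⟩ := ih fun u hu => h u (hu.trans t.lt_succ_self)
    obtain ⟨p', σ', hσ', hgain'⟩ :=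
      exists_add_le_exchangeGain M p σ (hσ ▸ h t t.lt_succ_self)
    refine ⟨p', σ', by rw [hσ', hσ, mul_add_one], ?_⟩
    calc (t + 1) • δ = t • δ + δ := succ_nsmul δ t
      _ ≤ exchangeGain M p σ + δ := add_le_add_left hgain δ
      _ ≤ exchangeGain M p' σ' := hgain'

end Greedy

theorem seed_matching_from_switchers_general [Fintype ι] [LinearOrder ι] [Fintype κ]
    [LinearOrder κ] (e : ι ≃ κ) (M : ι → κ → ℝ) {δ η : ℝ} (hδ : 0 ≤ δ)
    (hs : η * Fintype.card ι ^ 4 ≤ #(wideSwitchers M δ)) :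
    ∃ π : ι ≃ κ, δ * η * Fintype.card ι / 4 ≤ |∑ i, M i (π i)| := by
  set n := Fintype.card ι
  have hmany : ∀ u < ⌈η * n / 2⌉₊, 2 * u * n ^ 3 < #(wideSwitchers M δ) := by
    intro u hu
    have hu' : (u : ℝ) < η * n / 2 := Nat.lt_ceil.1 hu
    have hn : n ≠ 0 := by
      intro hn
      simp [hn] at hu
    have : (2 * u * n ^ 3 : ℝ) < #(wideSwitchers M δ) :=
      calc (2 * u * n ^ 3 : ℝ) < 2 * (η * n / 2) * n ^ 3 := by gcongr
        _ = η * n ^ 4 := by ring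
        _ ≤ #(wideSwitchers M δ) := hs
    exact_mod_cast this
  obtain ⟨p, σ, -, hgain⟩ := exists_nsmul_le_exchangeGain e M _ hmany
  have hdiff : η * n / 2 * δ ≤ ∑ i, M i (p i) - ∑ i, M i ((σ.trans p) i) := by
    rw [← exchangeGain_eq_sum_sub_sum]
    refine le_trans ?_ hgain
    rw [nsmul_eq_mul]
    exact mul_le_mul_of_nonneg_right (Nat.le_ceil _) hδ
  by_contra! hsmall
  have hp := (abs_lt.1 (hsmall p)).2
  have hσp := (abs_lt.1 (hsmall (σ.trans p))).1
  linarith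

theorem IsSigning.ne_iff_two_le_abs_switchGap {n : ℕ} {M : Fin n → Fin n → ℤ} (hM : IsSigning n M)
    (a c b d : Fin n) : M a b + M c d ≠ M a d + M c b ↔ 2 ≤ |switchGap M a c b d| := by
  rw [switchGap]
  rcases hM a b with hab | hab <;> rcases hM c d with hcd | hcd <;>
    rcases hM a d with had | had <;> rcases hM c b with hcb | hcb <;>
    simp [hab, hcd, had, hcb]

theorem IsSigning.switcherCount_eq_card_wideSwitchers {n : ℕ} {M : Fin n → Fin n → ℤ}
    (hM : IsSigning n M) :
    switcherCount n M = #(wideSwitchers (fun i j => (M i j : ℝ)) 2) := by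
  refine card_equiv (Equiv.prodAssoc _ _ _).symm ?_
  rintro ⟨a, c, b, d⟩
  have hcast : switchGap (fun i j => (M i j : ℝ)) a c b d = (switchGap M a c b d : ℤ) := by
    simp [switchGap]
  have hgap : 2 ≤ |((switchGap M a c b d : ℤ) : ℝ)| ↔ 2 ≤ |switchGap M a c b d| := by
    norm_cast
  rw [mem_filter_univ, Equiv.prodAssoc_symm_apply, mem_wideSwitchers, hcast, hgap,
    hM.ne_iff_two_le_abs_switchGap]

theorem seed_matching_from_switchers (n : ℕ) (hn : 1 ≤ n)
    (M : Fin n → Fin n → ℤ) (hM : IsSigning n M) (η : ℝ) (hη : 0 < η)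
    (hs : (switcherCount n M : ℝ) ≥ η * n ^ 4) :
    ∃ π : Equiv.Perm (Fin n), |(∑ i, (M i (π i) : ℝ))| ≥ η * n / 2 := by
  obtain ⟨π, hπ⟩ := seed_matching_from_switchers_general (η := η) (.refl _)
    (fun i j => (M i j : ℝ)) zero_le_two
    (by rwa [Fintype.card_fin, ← hM.switcherCount_eq_card_wideSwitchers])
  exact ⟨π, by rw [Fintype.card_fin] at hπ; linarith⟩
end

section
/- Let M be a signing of K_{n,n}, let α > 0 be real, and let π, ρ be permutations of Fin n with π i ≠ ρ i for every i (so the union of the two matchings is a spanning 2-factor F). Suppose the number of unordered pairs {i, j} with i ≠ j, ρ⁻¹(π i) = j, ρ⁻¹(π j) = i, and M i (π i) + M j (π j) ≠ M i (ρ i) + M j (ρ j) (i.e. the number of C₄-components of F that are switchers) is at least α·n. Then there exist permutations μ, ν of Fin n such that {μ i, ν i} = {π i, ρ i} for every i (so μ and ν decompose F into two perfect matchings), |∑ i, M i (μ i)| ≥ (α/4 − 3/n)·n, and |∑ i, M i (ν i)| ≥ (α/4 − 3/n)·n. -/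
open Finset

/-! Exchanging `π` and `ρ` on a switcher whose two perfect matchings have sums differing by `d`
changes the difference of the two matching sums by `2 * d` and leaves their total `T` unchanged.
Over all choices of switchers, this difference attains a value `x` with `|x|` large and, moving
greedily towards `0`, also one with `|x|` small. One of the two has `|x|` far from `|T|`, and then
both sums `(T ± x) / 2` are far from `0`. -/

section SignedSums

variable {β R : Type*} [CommRing R] [LinearOrder R] [IsStrictOrderedRing R]
  {P : Finset β} {d : β → R} {b : R}

/- The numbers `c - 2 * ∑ p ∈ u, d p` with `u ⊆ P` are the signed sums `e + ∑ p ∈ P, ± d p` around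
the centre `e = c - ∑ p ∈ P, d p`. -/

theorem exists_subset_abs_sub_two_mul_sum_le (hd : ∀ p ∈ P, |d p| ≤ b) (c : R) :
    ∃ u ⊆ P, |c - 2 * ∑ p ∈ u, d p| ≤ max b (|c - ∑ p ∈ P, d p| - ∑ p ∈ P, |d p|) := by
  classical
  induction P using Finset.induction_on generalizing c with
  | empty => exact ⟨∅, Subset.rfl, by simp⟩
  | insert a P ha ih =>
    rw [forall_mem_insert] at hd
    rw [sum_insert ha, sum_insert ha]
    -- The sign of `d a` is chosen so that the centre moves towards `0`.
    have hcentre : |c - ∑ p ∈ P, d p| = |(|c - (d a + ∑ p ∈ P, d p)| - |d a|)| ∨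
        |c - 2 * d a - ∑ p ∈ P, d p| = |(|c - (d a + ∑ p ∈ P, d p)| - |d a|)| := by
      grind
    have hmax : |(|c - (d a + ∑ p ∈ P, d p)| - |d a|)| - ∑ p ∈ P, |d p| ≤
        max b (|c - (d a + ∑ p ∈ P, d p)| - (|d a| + ∑ p ∈ P, |d p|)) := by
      have hnonneg : 0 ≤ ∑ p ∈ P, |d p| := sum_nonneg fun p _ => abs_nonneg (d p)
      grind
    rcases hcentre with hcentre | hcentre
    · obtain ⟨u, hu, hle⟩ := ih hd.2 c
      refine ⟨u, hu.trans (subset_insert a P), hle.trans (max_le (le_max_left _ _) ?_)⟩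
      rwa [hcentre]
    · obtain ⟨u, hu, hle⟩ := ih hd.2 (c - 2 * d a)
      refine ⟨insert a u, insert_subset_insert a hu, ?_⟩
      rw [sum_insert fun hau => ha (hu hau), mul_add, ← sub_sub]
      refine hle.trans (max_le (le_max_left _ _) ?_)
      rwa [hcentre]

theorem exists_subset_le_abs_sub_two_mul_sum (P : Finset β) (d : β → R) (c : R) :
    ∃ u ⊆ P, |c - ∑ p ∈ P, d p| + ∑ p ∈ P, |d p| ≤ |c - 2 * ∑ p ∈ u, d p| := by
  rcases le_total 0 (c - ∑ p ∈ P, d p) with hc | hc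
  · refine ⟨{p ∈ P | d p < 0}, filter_subset _ _, ?_⟩
    have habs : ∑ p ∈ P, |d p| = ∑ p ∈ P, d p - 2 * ∑ p ∈ P with d p < 0, d p := by
      rw [sum_filter, mul_sum, ← sum_sub_distrib]
      exact sum_congr rfl fun p _ => by grind
    rw [abs_of_nonneg hc, habs]
    exact le_of_eq_of_le (by ring) (le_abs_self _)
  · refine ⟨{p ∈ P | 0 < d p}, filter_subset _ _, ?_⟩
    have habs : ∑ p ∈ P, |d p| = 2 * (∑ p ∈ P with 0 < d p, d p) - ∑ p ∈ P, d p := by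
      rw [sum_filter, mul_sum, ← sum_sub_distrib]
      exact sum_congr rfl fun p _ => by grind
    rw [abs_of_nonpos hc, habs]
    exact le_of_eq_of_le (by ring) (neg_le_abs _)

theorem exists_subset_sum_abs_le_abs_sub_abs (hb : 0 ≤ b) (hd : ∀ p ∈ P, |d p| ≤ b) (c t : R) :
    ∃ u ⊆ P, ∑ p ∈ P, |d p| ≤ 2 * |(|t| - |c - 2 * ∑ p ∈ u, d p|)| + b := by
  obtain ⟨u, hu, hsmall⟩ := exists_subset_abs_sub_two_mul_sum_le hd c
  obtain ⟨v, hv, hlarge⟩ := exists_subset_le_abs_sub_two_mul_sum P d c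
  have hspread : ∑ p ∈ P, |d p| - b ≤
      |c - 2 * ∑ p ∈ v, d p| - |c - 2 * ∑ p ∈ u, d p| := by
    have hnonneg : 0 ≤ ∑ p ∈ P, |d p| := sum_nonneg fun p _ => abs_nonneg (d p)
    have hcentre := abs_nonneg (c - ∑ p ∈ P, d p)
    rcases le_max_iff.mp hsmall with hsmall | hsmall <;> linarith
  have htriangle : |c - 2 * ∑ p ∈ v, d p| - |c - 2 * ∑ p ∈ u, d p| ≤
      |(|t| - |c - 2 * ∑ p ∈ u, d p|)| + |(|t| - |c - 2 * ∑ p ∈ v, d p|)| := by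
    linarith [le_abs_self (|t| - |c - 2 * ∑ p ∈ u, d p|),
      neg_le_abs (|t| - |c - 2 * ∑ p ∈ v, d p|)]
  rcases le_total |(|t| - |c - 2 * ∑ p ∈ u, d p|)| |(|t| - |c - 2 * ∑ p ∈ v, d p|)| with h | h
  · exact ⟨v, hv, by linarith⟩
  · exact ⟨u, hu, by linarith⟩

theorem exists_subset_sum_abs_le_abs_sub_and_abs_add (hb : 0 ≤ b) (hd : ∀ p ∈ P, |d p| ≤ b)
    (x y : R) :
    ∃ u ⊆ P, ∑ p ∈ P, |d p| ≤ 4 * |x - ∑ p ∈ u, d p| + b ∧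
      ∑ p ∈ P, |d p| ≤ 4 * |y + ∑ p ∈ u, d p| + b := by
  obtain ⟨u, hu, hfar⟩ := exists_subset_sum_abs_le_abs_sub_abs hb hd (x - y) (x + y)
  have hx : |(|x + y| - |x - y - 2 * ∑ p ∈ u, d p|)| ≤ 2 * |x - ∑ p ∈ u, d p| := calc
    _ = |(|x + y| - |-(x - y - 2 * ∑ p ∈ u, d p)|)| := by rw [abs_neg]
    _ ≤ |x + y - -(x - y - 2 * ∑ p ∈ u, d p)| := abs_abs_sub_abs_le _ _
    _ = |2 * (x - ∑ p ∈ u, d p)| := by ring_nf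
    _ = 2 * |x - ∑ p ∈ u, d p| := by rw [abs_mul, abs_two]
  have hy : |(|x + y| - |x - y - 2 * ∑ p ∈ u, d p|)| ≤ 2 * |y + ∑ p ∈ u, d p| := calc
    _ ≤ |x + y - (x - y - 2 * ∑ p ∈ u, d p)| := abs_abs_sub_abs_le _ _
    _ = |2 * (y + ∑ p ∈ u, d p)| := by ring_nf
    _ = 2 * |y + ∑ p ∈ u, d p| := by rw [abs_mul, abs_two]
  exact ⟨u, hu, by linarith, by linarith⟩

end SignedSums

section Exchange

variable {ι κ β R : Type*} {π ρ : ι ≃ κ} {A : Finset ι}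

/-- The matchings `π` and `ρ` cover the same columns from the rows in `A`; equivalently, `A` is the
row set of a union of components of the 2-factor `π ∪ ρ`, so `π` and `ρ` can be exchanged on `A`. -/
def IsExchangeable (π ρ : ι ≃ κ) (A : Finset ι) : Prop :=
  π '' (A : Set ι) = ρ '' (A : Set ι)

theorem IsExchangeable.symm_apply_mem_iff (h : IsExchangeable π ρ A) (i : ι) :
    π.symm (ρ i) ∈ A ↔ i ∈ A :=
  calc π.symm (ρ i) ∈ A ↔ ρ i ∈ π '' (A : Set ι) := (Set.mem_image_equiv (f := π)).symm
    _ ↔ ρ i ∈ ρ '' (A : Set ι) := by rw [h]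
    _ ↔ i ∈ A := ρ.injective.mem_set_image

theorem IsExchangeable.biUnion [DecidableEq ι] {P : Finset β} {C : β → Finset ι}
    (h : ∀ p ∈ P, IsExchangeable π ρ (C p)) : IsExchangeable π ρ (P.biUnion C) := by
  simp only [IsExchangeable, coe_biUnion, Set.image_iUnion₂]
  exact Set.iUnion₂_congr h

/-- The matching that agrees with `ρ` on the rows in `A` and with `π` on all other rows. -/
def exchange [DecidableEq ι] (h : IsExchangeable π ρ A) : ι ≃ κ :=
  (Equiv.Perm.ofSubtype (Equiv.Perm.subtypePerm (ρ.trans π.symm) h.symm_apply_mem_iff)).trans π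

theorem exchange_apply [DecidableEq ι] (h : IsExchangeable π ρ A) (i : ι) :
    exchange h i = if i ∈ A then ρ i else π i := by
  split_ifs with hi
  · exact (congrArg π (Equiv.Perm.ofSubtype_apply_of_mem _ hi)).trans (π.apply_symm_apply _)
  · exact congrArg π (Equiv.Perm.ofSubtype_apply_of_not_mem _ hi)

/-- The amount by which `π` outweighs `ρ` on the rows in `A`. -/
def exchangeGap [AddCommGroup R] (M : ι → κ → R) (π ρ : ι ≃ κ) (A : Finset ι) : R :=
  ∑ i ∈ A, (M i (π i) - M i (ρ i))

theorem sum_exchange [DecidableEq ι] [Fintype ι] [AddCommGroup R] (M : ι → κ → R)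
    (h : IsExchangeable π ρ A) :
    ∑ i, M i (exchange h i) = ∑ i, M i (π i) - exchangeGap M π ρ A := by
  rw [exchangeGap, ← Fintype.sum_ite_mem A, ← sum_sub_distrib]
  refine sum_congr rfl fun i _ => ?_
  rw [exchange_apply]
  split_ifs <;> simp

theorem exists_exchange_sum_abs_exchangeGap_le [Fintype ι] [CommRing R] [LinearOrder R]
    [IsStrictOrderedRing R] (M : ι → κ → R) {P : Finset β} {C : β → Finset ι} {b : R}
    (hb : 0 ≤ b) (hC : ∀ p ∈ P, IsExchangeable π ρ (C p))
    (hdisj : (P : Set β).PairwiseDisjoint C) (hgap : ∀ p ∈ P, |exchangeGap M π ρ (C p)| ≤ b) :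
    ∃ μ ν : ι ≃ κ, (∀ i, (μ i = π i ∧ ν i = ρ i) ∨ (μ i = ρ i ∧ ν i = π i)) ∧
      ∑ p ∈ P, |exchangeGap M π ρ (C p)| ≤ 4 * |∑ i, M i (μ i)| + b ∧
      ∑ p ∈ P, |exchangeGap M π ρ (C p)| ≤ 4 * |∑ i, M i (ν i)| + b := by
  classical
  obtain ⟨u, hu, hμ, hν⟩ := exists_subset_sum_abs_le_abs_sub_and_abs_add hb hgap
    (∑ i, M i (π i)) (∑ i, M i (ρ i))
  have hA : IsExchangeable π ρ (u.biUnion C) := .biUnion fun p hp => hC p (hu hp)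
  have hgapA : exchangeGap M π ρ (u.biUnion C) = ∑ p ∈ u, exchangeGap M π ρ (C p) :=
    sum_biUnion (hdisj.subset (coe_subset.mpr hu))
  have hA_swap : IsExchangeable ρ π (u.biUnion C) := Eq.symm hA
  have hgapA_swap : exchangeGap M ρ π (u.biUnion C) = -∑ p ∈ u, exchangeGap M π ρ (C p) := by
    rw [← hgapA, exchangeGap, exchangeGap, ← sum_neg_distrib]
    exact sum_congr rfl fun i _ => (neg_sub _ _).symm
  refine ⟨exchange hA, exchange hA_swap, fun i => ?_, ?_, ?_⟩
  · rw [exchange_apply, exchange_apply]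
    split_ifs <;> simp
  · rwa [sum_exchange, hgapA]
  · rwa [sum_exchange, hgapA_swap, sub_neg_eq_add]

end Exchange

section Switchers

variable {ι κ : Type*} [Fintype ι] [LinearOrder ι] {M : ι → κ → ℤ} {π ρ : ι ≃ κ} {p : ι × ι}

/-- The switchers of the 2-factor `π ∪ ρ`: its `C₄`-components whose two perfect matchings have
different sums. Each is encoded by its two rows, listed in increasing order. -/
def switchers (M : ι → κ → ℤ) (π ρ : ι ≃ κ) : Finset (ι × ι) :=
  {p | p.1 < p.2 ∧ ρ.symm (π p.1) = p.2 ∧ ρ.symm (π p.2) = p.1 ∧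
    M p.1 (π p.1) + M p.2 (π p.2) ≠ M p.1 (ρ p.1) + M p.2 (ρ p.2)}

theorem mem_switchers : p ∈ switchers M π ρ ↔
    p.1 < p.2 ∧ ρ.symm (π p.1) = p.2 ∧ ρ.symm (π p.2) = p.1 ∧
      M p.1 (π p.1) + M p.2 (π p.2) ≠ M p.1 (ρ p.1) + M p.2 (ρ p.2) := by
  simp [switchers]

theorem isExchangeable_of_mem_switchers (hp : p ∈ switchers M π ρ) :
    IsExchangeable π ρ {p.1, p.2} := by
  obtain ⟨-, h₁, h₂, -⟩ := mem_switchers.mp hp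
  rw [IsExchangeable, coe_pair, Set.image_pair, Set.image_pair, ρ.symm_apply_eq.mp h₁,
    ρ.symm_apply_eq.mp h₂, Set.pair_comm]

theorem pairwiseDisjoint_switchers (M : ι → κ → ℤ) (π ρ : ι ≃ κ) :
    (switchers M π ρ : Set (ι × ι)).PairwiseDisjoint fun p => ({p.1, p.2} : Finset ι) := by
  intro p hp q hq hne
  obtain ⟨hp_lt, hp₁, hp₂, -⟩ := mem_switchers.mp hp
  obtain ⟨hq_lt, hq₁, hq₂, -⟩ := mem_switchers.mp hq
  have hsame : p.1 ≠ q.1 ∧ p.2 ≠ q.2 := by grind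
  have hcross : p.1 ≠ q.2 ∧ p.2 ≠ q.1 := by grind
  simp [Function.onFun, hsame.1.symm, hsame.2.symm, hcross.1.symm, hcross.2.symm]

theorem abs_exchangeGap_of_mem_switchers (hM : ∀ i j, M i j = 1 ∨ M i j = -1)
    (hp : p ∈ switchers M π ρ) :
    2 ≤ |exchangeGap M π ρ {p.1, p.2}| ∧ |exchangeGap M π ρ {p.1, p.2}| ≤ 4 := by
  obtain ⟨hlt, -, -, hne⟩ := mem_switchers.mp hp
  rw [exchangeGap, sum_pair hlt.ne]
  rcases hM p.1 (π p.1) with h₁ | h₁ <;> rcases hM p.2 (π p.2) with h₂ | h₂ <;>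
    rcases hM p.1 (ρ p.1) with h₃ | h₃ <;> rcases hM p.2 (ρ p.2) with h₄ | h₄ <;>
      simp_all

end Switchers

/-- With at least `α * n` switchers, both discrepancies are at least `α / 2 - 1 / n`, which improves
on the bound `α / 4 - 3 / n`. -/
theorem split_two_factor_with_switchers_general {ι κ : Type*} [Fintype ι] [LinearOrder ι]
    (M : ι → κ → ℤ) (hM : ∀ i j, M i j = 1 ∨ M i j = -1) (π ρ : ι ≃ κ) :
    ∃ μ ν : ι ≃ κ,
      (∀ i, (μ i = π i ∧ ν i = ρ i) ∨ (μ i = ρ i ∧ ν i = π i)) ∧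
      #(switchers M π ρ) ≤ 2 * |∑ i, M i (μ i)| + 2 ∧
      #(switchers M π ρ) ≤ 2 * |∑ i, M i (ν i)| + 2 := by
  obtain ⟨μ, ν, hmix, hμ, hν⟩ := exists_exchange_sum_abs_exchangeGap_le M zero_le_four
    (fun p hp => isExchangeable_of_mem_switchers hp) (pairwiseDisjoint_switchers M π ρ)
    fun p hp => (abs_exchangeGap_of_mem_switchers hM hp).2
  have hcard : #(switchers M π ρ) • 2 ≤
      ∑ p ∈ switchers M π ρ, |exchangeGap M π ρ {p.1, p.2}| :=
    card_nsmul_le_sum _ _ _ fun p hp => (abs_exchangeGap_of_mem_switchers hM hp).1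
  rw [nsmul_eq_mul] at hcard
  exact ⟨μ, ν, hmix, by linarith, by linarith⟩

theorem div_four_sub_three_div_mul_le_abs {n k α s : ℝ} (hk : α * n ≤ k)
    (hs : k ≤ 2 * |s| + 2) : (α / 4 - 3 / n) * n ≤ |s| := by
  rcases eq_or_ne n 0 with hn | hn
  · rw [hn, mul_zero]
    exact abs_nonneg s
  · calc (α / 4 - 3 / n) * n = α * n / 4 - 3 := by field_simp
      _ ≤ |s| := by linarith [abs_nonneg s]

theorem split_two_factor_with_switchers (n : ℕ) (M : Fin n → Fin n → ℤ)
    (hM : IsSigning n M) (α : ℝ) (hα : 0 < α)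
    (π ρ : Equiv.Perm (Fin n)) (hdisj : ∀ i, π i ≠ ρ i)
    (hsw : ((univ.filter fun p : Fin n × Fin n =>
        p.1 < p.2 ∧ ρ⁻¹ (π p.1) = p.2 ∧ ρ⁻¹ (π p.2) = p.1 ∧
          M p.1 (π p.1) + M p.2 (π p.2) ≠ M p.1 (ρ p.1) + M p.2 (ρ p.2)).card : ℝ)
        ≥ α * n) :
    ∃ μ ν : Equiv.Perm (Fin n),
      (∀ i, (μ i = π i ∧ ν i = ρ i) ∨ (μ i = ρ i ∧ ν i = π i)) ∧
      |(∑ i, (M i (μ i) : ℝ))| ≥ (α / 4 - 3 / n) * n ∧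
      |(∑ i, (M i (ν i) : ℝ))| ≥ (α / 4 - 3 / n) * n := by
  obtain ⟨μ, ν, hmix, hμ, hν⟩ := split_two_factor_with_switchers_general M hM π ρ
  exact ⟨μ, ν, hmix, div_four_sub_three_div_mul_le_abs hsw (mod_cast hμ),
    div_four_sub_three_div_mul_le_abs hsw (mod_cast hν)⟩
end

section
/- For every real η > 0 there exists n₀ such that for every odd n ≥ n₀ the following holds: for every signing M of K_{n,n} with s(M) ≥ η·n⁴, there exist families of permutations π_j, ρ_j of Fin n indexed by j : Fin ((n−1)/2) such that (a) for all j and i: π_j i ≠ i, ρ_j i ≠ i, and π_j i ≠ ρ_j i; (b) for every pair (i, k) with k ≠ i there is exactly one occurrence of k among the values π_1 i, …, π_{(n−1)/2} i, ρ_1 i, …, ρ_{(n−1)/2} i (so the 2-factors F_j decompose K_{n,n} minus the diagonal matching); and (c) for every j, the number of unordered pairs {i, i'} with (ρ_j)⁻¹(π_j i) = i', i ≠ i', and M i (π_j i) + M i' (π_j i') ≠ M i (ρ_j i) + M i' (ρ_j i') is at least η·n/2. -/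
/-!
Write `n = 2 * m + 1` and label the vertices by one point and `m` blocks of size two. An idempotent
Latin square `τ` of order `m` yields `m` 2-factors that decompose the complement of the diagonal
matching: apart from one 6-cycle, the components of the `j`-th one are 4-cycles, each between the
rows of a block `k` and the columns of the block `τ j k`.

Under a uniformly random labelling each of these 4-cycles is a switcher with probability at least
about `4 * η`, since a switcher comes from four ordered quadruples. To get concentration, fix `j`
and keep about `m / 3` of the blocks `k`, such that no `τ j k` is kept; then the 4-cycles on the
kept blocks have disjoint sets of labels. Cut them into chunks of `r ≈ √n / 8`. By the birthday
bound the `4 * r` random labels of a chunk are, up to a factor of two in probability, independent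
and uniform, so Chernoff's inequality shows that the chunk has at least `7 / 8` of its expected
number of switchers, except with probability `exp (-Ω(√n))`. A union bound over all `j` and all
chunks leaves a labelling for which every 2-factor has at least
`(7 / 8) * (4 * η) * (m / 3) ≈ (7 / 12) * η * n` switchers, up to lower order terms.
-/

open Finset

open Filter Function Topology
open Equiv (Perm)
open Fintype (card)
open scoped Nat

section LatinSquare

/-- An idempotent Latin square on `α`, given as the map `τ` sending row `j` and column `k` to the
symbol `τ j k`. -/
structure IsIdempotentLatin_s12 {α : Type*} (τ : α → α → α) : Prop where
  apply_self (j : α) : τ j j = j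
  injective_row (j : α) : Injective (τ j)
  injective_col (k : α) : Injective fun j ↦ τ j k

namespace IsIdempotentLatin_s12

variable {α β : Type*} {τ : α → α → α}

lemma apply_eq_right_iff (hτ : IsIdempotentLatin_s12 τ) {j k : α} : τ j k = k ↔ k = j :=
  ⟨fun h ↦ (hτ.injective_col k (h.trans (hτ.apply_self k).symm)).symm,
    fun h ↦ h ▸ hτ.apply_self k⟩

lemma apply_eq_left_iff (hτ : IsIdempotentLatin_s12 τ) {j k : α} : τ j k = j ↔ k = j :=
  ⟨fun h ↦ hτ.injective_row j (h.trans (hτ.apply_self j).symm), fun h ↦ h ▸ hτ.apply_self k⟩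

lemma conj (hτ : IsIdempotentLatin_s12 τ) (e : α ≃ β) :
    IsIdempotentLatin_s12 fun j k ↦ e (τ (e.symm j) (e.symm k)) where
  apply_self j := by simp [hτ.apply_self]
  injective_row _ := e.injective.comp ((hτ.injective_row _).comp e.symm.injective)
  injective_col k := e.injective.comp ((hτ.injective_col (e.symm k)).comp e.symm.injective)

end IsIdempotentLatin_s12

variable (R : Type*) [CommRing R] [Invertible (2 : R)]

lemma isIdempotentLatin_reflection : IsIdempotentLatin_s12 fun j k : R ↦ 2 * j - k where
  apply_self j := by ring
  injective_row j k l h := by simpa using h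
  injective_col k j l h := by
    linear_combination ⅟(2 : R) * h - (j - l) * invOf_mul_self (2 : R)

variable [DecidableEq R]

/-- The prolongation of the Latin square `2 * j - k` to `Option R`: the symbols `j + ⅟2` in the
transversal formed by the cells `(j, j - ⅟2)` are replaced by the new symbol `none` and moved to
the new row and to the new column. -/
def prolongedReflection : Option R → Option R → Option R
  | none, none => none
  | none, some k => some (k + 1)
  | some j, none => some (j + ⅟2)
  | some j, some k => if k = j - ⅟2 then none else some (2 * j - k)

lemma isIdempotentLatin_prolongedReflection [Nontrivial R] :
    IsIdempotentLatin_s12 (prolongedReflection R) := by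
  have two : ⅟(2 : R) * 2 = 1 := invOf_mul_self 2
  have halve (x y : R) (h : 2 * x = 2 * y) : x = y := (isUnit_of_invertible 2).mul_left_cancel h
  refine ⟨?_, ?_, ?_⟩
  · rintro (_ | j)
    · rfl
    · have : j ≠ j - ⅟2 := by grind [one_ne_zero (α := R)]
      simp only [prolongedReflection, if_neg this]
      congr 1; ring
  · rintro (_ | j) (_ | k) (_ | l) h <;> grind [prolongedReflection]
  · rintro (_ | k) (_ | j) (_ | l) h
    case some.none.some => grind [prolongedReflection, halve k (l - ⅟2)]
    case some.some.none => grind [prolongedReflection, halve k (j - ⅟2)]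
    case some.some.some => grind [prolongedReflection, halve j l]
    all_goals grind [prolongedReflection]

end LatinSquare

lemma exists_isIdempotentLatin_s12 {m : ℕ} (hm : m ≠ 2) :
    ∃ τ : Fin m → Fin m → Fin m, IsIdempotentLatin_s12 τ := by
  have invertibleTwo (s : ℕ) : Nonempty (Invertible (2 : ZMod (2 * s + 1))) := by
    have : IsUnit ((2 : ℕ) : ZMod (2 * s + 1)) := (ZMod.isUnit_iff_coprime _ _).2 (by simp)
    exact this.nonempty_invertible
  obtain ⟨s, rfl | rfl⟩ := Nat.even_or_odd' m
  · obtain rfl | ⟨t, rfl⟩ : s = 0 ∨ ∃ t, s = t + 2 := by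
      obtain _ | _ | t := s <;> simp_all
    · exact ⟨fun j ↦ j.elim0, ⟨nofun, nofun, nofun⟩⟩
    · obtain ⟨_⟩ := invertibleTwo (t + 1)
      have : Fact (1 < 2 * (t + 1) + 1) := ⟨by lia⟩
      have hcard : card (Option (ZMod (2 * (t + 1) + 1))) = 2 * (t + 2) := by
        rw [Fintype.card_option, ZMod.card]; lia
      exact ⟨_, (isIdempotentLatin_prolongedReflection _).conj (Fintype.equivFinOfCardEq hcard)⟩
  · obtain ⟨_⟩ := invertibleTwo s
    exact ⟨_, (isIdempotentLatin_reflection _).conj (Fintype.equivFinOfCardEq (ZMod.card _))⟩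

section BlockMatching

variable {α V : Type*} [DecidableEq α]

/-- The matching with colour `c` of the `j`-th 2-factor. The vertices are a point `none` and the
blocks `{k} × Bool`; the matchings of the two colours form a 4-cycle between the rows of the block
`k` and the columns of the block `τ j k` for each `k ≠ j`, and a 6-cycle on `none` and the block
`j`. -/
def blockMatching (τ : α → α → α) (j : α) (c : Bool) : Option (α × Bool) → Option (α × Bool)
  | none => some (j, !c)
  | some (k, b) => if k = j then if b = c then none else some (j, c) else some (τ j k, b == c)

variable {τ : α → α → α}

lemma blockMatching_of_ne {j k : α} (hk : k ≠ j) (b c : Bool) :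
    blockMatching τ j c (some (k, b)) = some (τ j k, b == c) := if_neg hk

lemma blockMatching_injective (hτ : IsIdempotentLatin_s12 τ) (j : α) (c : Bool) :
    Injective (blockMatching τ j c) := by
  have hrow : ∀ k l, τ j k = τ j l → k = l := hτ.injective_row j
  have hfix : ∀ k, τ j k = j → k = j := fun _ ↦ hτ.apply_eq_left_iff.1
  rintro (_ | ⟨k, _ | _⟩) (_ | ⟨l, _ | _⟩) h <;> cases c <;> simp only [blockMatching] at h <;>
    grind

lemma blockMatching_ne_self (hτ : IsIdempotentLatin_s12 τ) (j : α) (c : Bool) (x : Option (α × Bool)) :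
    blockMatching τ j c x ≠ x := by
  have hfix : ∀ k, τ j k = k → k = j := fun _ ↦ hτ.apply_eq_right_iff.1
  rcases x with (_ | ⟨k, _ | _⟩) <;> cases c <;> simp only [blockMatching] <;> grind

lemma blockMatching_injective_index (hτ : IsIdempotentLatin_s12 τ) (x : Option (α × Bool)) :
    Injective fun jc : α × Bool ↦ blockMatching τ jc.1 jc.2 x := by
  have hcol : ∀ i j k, τ i k = τ j k → i = j := fun _ _ k h ↦ hτ.injective_col k h
  have hfix : ∀ j k, τ j k = k → k = j := fun _ _ ↦ hτ.apply_eq_right_iff.1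
  rintro ⟨i, _ | _⟩ ⟨j, _ | _⟩ h <;> rcases x with (_ | ⟨k, _ | _⟩) <;>
    simp only [blockMatching] at h <;> grind

variable [Fintype α]

/-- The matching `blockMatching τ j c`, as a permutation of a vertex set `V` labelled by `σ`. -/
noncomputable def factorMatching (hτ : IsIdempotentLatin_s12 τ) (σ : Option (α × Bool) ≃ V) (j : α)
    (c : Bool) : Perm V :=
  σ.permCongr (.ofBijective _ (Finite.injective_iff_bijective.1 (blockMatching_injective hτ j c)))

variable (hτ : IsIdempotentLatin_s12 τ) (σ : Option (α × Bool) ≃ V)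

lemma factorMatching_apply_label (j : α) (c : Bool) (x : Option (α × Bool)) :
    factorMatching hτ σ j c (σ x) = σ (blockMatching τ j c x) := by
  simp [factorMatching]

lemma factorMatching_ne_self (j : α) (c : Bool) (i : V) : factorMatching hτ σ j c i ≠ i := by
  obtain ⟨x, rfl⟩ := σ.surjective i
  simpa [factorMatching_apply_label] using blockMatching_ne_self hτ j c x

lemma factorMatching_injective_index (i : V) :
    Injective fun jc : α × Bool ↦ factorMatching hτ σ jc.1 jc.2 i := by
  obtain ⟨x, rfl⟩ := σ.surjective i
  simpa only [factorMatching_apply_label, comp_def] using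
    σ.injective.comp (blockMatching_injective_index hτ x)

lemma factorMatching_true_ne_false (j : α) (i : V) :
    factorMatching hτ σ j true i ≠ factorMatching hτ σ j false i := fun h ↦ by
  simpa using factorMatching_injective_index hτ σ i (a₁ := (j, true)) (a₂ := (j, false)) h

-- There are as many matchings as vertices other than `i`, so injectivity is enough.
lemma existsUnique_factorMatching_eq {i k : V} (hki : k ≠ i) :
    ∃! jc : α × Bool, factorMatching hτ σ jc.1 jc.2 i = k := by
  have : Finite V := .of_equiv _ σ
  let f (jc : α × Bool) : {k // k ≠ i} := ⟨_, factorMatching_ne_self hτ σ jc.1 jc.2 i⟩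
  have hf : Injective f := fun _ _ h ↦
    factorMatching_injective_index hτ σ i (congrArg Subtype.val h)
  have hcard : Nat.card {k // k ≠ i} ≤ Nat.card (α × Bool) := by
    classical
    have := Fintype.ofEquiv _ σ
    rw [Nat.card_eq_fintype_card, Fintype.card_subtype_compl, ← Fintype.card_congr σ]
    simp
  simpa [f, Subtype.ext_iff] using
    (hf.bijective_of_nat_card_le hcard).existsUnique ⟨k, hki⟩

end BlockMatching

section Counting

lemma pow_mul_factorial_sub_le {n t : ℕ} (h : 2 * t ^ 2 ≤ n) : n ^ t * (n - t)! ≤ 2 * n ! := by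
  obtain rfl | hn := n.eq_zero_or_pos
  · obtain rfl : t = 0 := by simpa using h
    simp
  have htn : t ≤ n := by nlinarith
  have hn' : (0 : ℝ) < n := by exact_mod_cast hn
  have bernoulli : (1 / 2 : ℝ) ≤ (1 - t / n) ^ t := by
    have htn' : (t : ℝ) / n ≤ 1 := by rw [div_le_one hn']; exact_mod_cast htn
    have hsq : (t : ℝ) * (t / n) ≤ 1 / 2 := by
      rw [← mul_div_assoc, div_le_iff₀ hn']
      have : (2 * t ^ 2 : ℝ) ≤ n := by exact_mod_cast h
      linarith
    have := one_add_mul_le_pow (a := -(t / n : ℝ)) (by linarith) t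
    rw [sub_eq_add_neg]
    linarith
  have hpow : (n ^ t : ℝ) ≤ 2 * (n - t : ℕ) ^ t := by
    calc (n ^ t : ℝ) ≤ n ^ t * (2 * (1 - t / n) ^ t) :=
          le_mul_of_one_le_right (by positivity) (by linarith)
      _ = 2 * (n * (1 - t / n)) ^ t := by rw [mul_pow]; ring
      _ = 2 * (n - t : ℕ) ^ t := by rw [mul_one_sub, mul_div_cancel₀ _ hn'.ne', Nat.cast_sub htn]
  have hdesc : n ^ t ≤ 2 * n.descFactorial t :=
    calc n ^ t ≤ 2 * (n - t) ^ t := by exact_mod_cast hpow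
      _ ≤ 2 * (n + 1 - t) ^ t := by gcongr; lia
      _ ≤ 2 * n.descFactorial t := by gcongr; exact n.pow_sub_le_descFactorial t
  calc n ^ t * (n - t)! ≤ 2 * n.descFactorial t * (n - t)! := by gcongr
    _ = 2 * n ! := by rw [← Nat.factorial_mul_descFactorial htn]; ring

variable {T Ω V : Type*} [Fintype T] [Fintype Ω] [Fintype V] [DecidableEq Ω]
  [DecidableEq V]

lemma card_equiv_comp_eq_le {e : T → Ω} (he : Injective e) (g : T → V) :
    #{σ : Ω ≃ V | σ ∘ e = g} ≤ (card Ω - card T)! := by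
  obtain hempty | ⟨σ₀, hσ₀⟩ := ({σ : Ω ≃ V | σ ∘ e = g} : Finset (Ω ≃ V)).eq_empty_or_nonempty
  · simp [hempty]
  rw [mem_filter_univ] at hσ₀
  have hfixing : card {ω : Perm Ω // ∀ x, ¬ x ∉ Set.range e → ω x = x} = (card Ω - card T)! := by
    rw [← Fintype.card_congr (Perm.subtypeEquivSubtypePerm (· ∉ Set.range e)), Fintype.card_perm,
      Fintype.card_subtype_compl, ← Fintype.card_congr (Equiv.ofInjective e he)]
  rw [← hfixing, ← Fintype.card_subtype]
  refine Fintype.card_le_of_injective (fun σ ↦ ⟨σ.1.trans σ₀.symm, fun x hx ↦ ?_⟩) fun σ σ' h ↦ ?_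
  · obtain ⟨y, rfl⟩ := not_not.1 hx
    rw [Equiv.trans_apply, Equiv.symm_apply_eq, ← comp_apply (f := σ.1), σ.2, ← hσ₀, comp_apply]
  · ext x
    simpa using DFunLike.congr_fun (congrArg Subtype.val h) x

lemma card_equiv_comp_mem_le {e : T → Ω} (he : Injective e) (B : Finset (T → V)) :
    #{σ : Ω ≃ V | ⇑σ ∘ e ∈ B} ≤ (card Ω - card T)! * #B := by
  classical
  refine card_le_mul_card_image_of_maps_to (f := fun σ : Ω ≃ V ↦ ⇑σ ∘ e)
    (fun σ hσ ↦ (mem_filter.1 hσ).2) _ fun g _ ↦ ?_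
  exact (card_le_card (filter_subset_filter _ (subset_univ _))).trans (card_equiv_comp_eq_le he g)

end Counting

section Chernoff

variable {W ι : Type*} [Fintype W] [Fintype ι]

lemma exp_neg_le_quadratic {s : ℝ} (hs : 0 ≤ s) : Real.exp (-s) ≤ 1 - s + s ^ 2 / 2 := by
  rw [Real.exp_neg, inv_le_iff_one_le_mul₀ (Real.exp_pos s)]
  have hpos : 0 ≤ 1 - s + s ^ 2 / 2 := by nlinarith [sq_nonneg (s - 1)]
  calc 1 ≤ (1 - s + s ^ 2 / 2) * (1 + s + s ^ 2 / 2) := by nlinarith [sq_nonneg (s ^ 2)]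
    _ ≤ _ := by gcongr; exact Real.quadratic_le_exp_of_nonneg hs

variable (G : W → Prop) [DecidablePred G]

lemma sum_pow_card_hits [DecidableEq ι] (x : ℝ) :
    ∑ f : ι → W, x ^ #{i | G (f i)} = (card W - (1 - x) * #{w | G w}) ^ card ι := by
  have hbase : ∑ w : W, (if G w then x else 1) = card W - (1 - x) * #{w | G w} := by
    have : ∀ w, (if G w then x else 1) = 1 - (1 - x) * if G w then 1 else 0 := by
      intro w; split_ifs <;> ring
    simp only [this, sum_sub_distrib, ← mul_sum, sum_boole]
    simp
  rw [← hbase, ← card_univ, ← prod_const, Fintype.prod_sum]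
  simp [prod_ite]

lemma card_few_hits_le [DecidableEq ι] {p δ : ℝ} (hp : 0 ≤ p) (hδ : 0 ≤ δ)
    (hG : p * card W ≤ #{w | G w}) :
    (#{f : ι → W | #{i | G (f i)} < (1 - δ) * p * card ι} : ℝ) ≤
      card W ^ card ι * Real.exp (-(δ ^ 2 * p / 2) * card ι) := by
  set a := (1 - δ) * p * card ι
  set few : Finset (ι → W) := {f | #{i | G (f i)} < a}
  have hx := exp_neg_le_quadratic hδ
  have hx1 : Real.exp (-δ) ≤ 1 := Real.exp_le_one_iff.2 (by linarith)
  have markov : #few * Real.exp (-δ * a) ≤ ∑ f : ι → W, Real.exp (-δ) ^ #{i | G (f i)} := by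
    rw [← nsmul_eq_mul]
    refine (card_nsmul_le_sum few _ _ fun f hf ↦ ?_).trans
      (sum_le_univ_sum_of_nonneg fun f ↦ by positivity)
    rw [← Real.exp_nat_mul, Real.exp_le_exp]
    nlinarith [(mem_filter.1 hf).2]
  have hbase : card W - (1 - Real.exp (-δ)) * #{w | G w} ≤
      card W * Real.exp (-((δ - δ ^ 2 / 2) * p)) := by
    have := Real.add_one_le_exp (-((δ - δ ^ 2 / 2) * p))
    calc card W - (1 - Real.exp (-δ)) * #{w | G w}
        ≤ card W - (1 - Real.exp (-δ)) * (p * card W) := by gcongr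
      _ ≤ card W - (δ - δ ^ 2 / 2) * (p * card W) :=
        sub_le_sub_left (mul_le_mul_of_nonneg_right (by linarith) (by positivity)) _
      _ = card W * (-((δ - δ ^ 2 / 2) * p) + 1) := by ring
      _ ≤ _ := by gcongr
  have hbase_nonneg : 0 ≤ card W - (1 - Real.exp (-δ)) * #{w | G w} := by
    have : (#{w | G w} : ℝ) ≤ card W := by exact_mod_cast card_le_univ _
    nlinarith [Real.exp_pos (-δ)]
  refine le_of_mul_le_mul_right ?_ (Real.exp_pos (-δ * a))
  calc #few * Real.exp (-δ * a)
      ≤ (card W - (1 - Real.exp (-δ)) * #{w | G w}) ^ card ι :=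
        markov.trans_eq (sum_pow_card_hits ..)
    _ ≤ (card W * Real.exp (-((δ - δ ^ 2 / 2) * p))) ^ card ι := by gcongr
    _ = card W ^ card ι * Real.exp (-(δ ^ 2 * p / 2) * card ι) * Real.exp (-δ * a) := by
      rw [mul_pow, ← Real.exp_nat_mul, mul_assoc, ← Real.exp_add]
      congr 2
      ring

end Chernoff

section RandomLabelling

variable {Ω V ι κ : Type*} [Fintype Ω] [Fintype V] [Fintype ι] [Fintype κ] [DecidableEq κ]
  (G : (κ → V) → Prop) [DecidablePred G] {p δ : ℝ}

lemma card_equiv_few_hits_le [DecidableEq Ω] [DecidableEq V] (hΩ : card Ω = card V) (hp : 0 ≤ p)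
    (hδ : 0 ≤ δ) (hG : p * card V ^ card κ ≤ #{w | G w}) {block : ι → κ → Ω}
    (hblock : Injective (uncurry block)) (hsmall : 2 * (card ι * card κ) ^ 2 ≤ card V) :
    (#{σ : Ω ≃ V | #{i | G (σ ∘ block i)} < (1 - δ) * p * card ι} : ℝ) ≤
      2 * Real.exp (-(δ ^ 2 * p / 2) * card ι) * (card V)! := by
  classical
  set few : Finset (ι → κ → V) := {f | #{i | G (f i)} < (1 - δ) * p * card ι}
  have hfew : (#few : ℝ) ≤
      card V ^ (card ι * card κ) * Real.exp (-(δ ^ 2 * p / 2) * card ι) := by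
    have := card_few_hits_le (ι := ι) G hp hδ (by simpa using hG)
    rwa [Fintype.card_fun, Nat.cast_pow, ← pow_mul, mul_comm (card κ)] at this
  have hcount : #{σ : Ω ≃ V | #{i | G (σ ∘ block i)} < (1 - δ) * p * card ι} ≤
      (card V - card ι * card κ)! * #few := by
    have := card_equiv_comp_mem_le (V := V) hblock (few.map (Equiv.curry ι κ V).symm.toEmbedding)
    rw [card_map, hΩ, Fintype.card_prod] at this
    convert this using 3
    simp only [few, mem_map_equiv, mem_filter_univ, Equiv.symm_symm, Equiv.curry_apply]
    rfl
  calc (#{σ : Ω ≃ V | #{i | G (σ ∘ block i)} < (1 - δ) * p * card ι} : ℝ)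
      ≤ (card V - card ι * card κ)! * #few := by exact_mod_cast hcount
    _ ≤ (card V - card ι * card κ)! *
        (card V ^ (card ι * card κ) * Real.exp (-(δ ^ 2 * p / 2) * card ι)) := by gcongr
    _ = Real.exp (-(δ ^ 2 * p / 2) * card ι) *
        (card V ^ (card ι * card κ) * (card V - card ι * card κ)! : ℕ) := by push_cast; ring
    _ ≤ Real.exp (-(δ ^ 2 * p / 2) * card ι) * (2 * (card V)! : ℕ) :=
      mul_le_mul_of_nonneg_left (Nat.cast_le.2 (pow_mul_factorial_sub_le hsmall))
        (Real.exp_pos _).le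
    _ = _ := by push_cast; ring

lemma exists_equiv_forall_card_hits_ge {K : Type*} [Fintype K] (hΩ : card Ω = card V) (hp : 0 ≤ p)
    (hδ : 0 ≤ δ) (hG : p * card V ^ card κ ≤ #{w | G w}) {block : K → ι → κ → Ω}
    (hblock : ∀ k, Injective (uncurry (block k))) (hsmall : 2 * (card ι * card κ) ^ 2 ≤ card V)
    (hK : 2 * card K * Real.exp (-(δ ^ 2 * p / 2) * card ι) < 1) :
    ∃ σ : Ω ≃ V, ∀ k, (1 - δ) * p * card ι ≤ #{i | G (σ ∘ block k i)} := by
  classical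
  let bad (k : K) : Finset (Ω ≃ V) := {σ | #{i | G (σ ∘ block k i)} < (1 - δ) * p * card ι}
  have hbad : #(univ.biUnion bad) < #(univ : Finset (Ω ≃ V)) := by
    rw [card_univ, Fintype.card_equiv (Fintype.equivOfCardEq hΩ), hΩ, ← Nat.cast_lt (α := ℝ)]
    calc (#(univ.biUnion bad) : ℝ) ≤ ∑ k, (#(bad k) : ℝ) := by exact_mod_cast card_biUnion_le
      _ ≤ ∑ _k : K, 2 * Real.exp (-(δ ^ 2 * p / 2) * card ι) * (card V)! :=
        sum_le_sum fun k _ ↦ card_equiv_few_hits_le G hΩ hp hδ hG (hblock k) hsmall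
      _ = 2 * card K * Real.exp (-(δ ^ 2 * p / 2) * card ι) * (card V)! := by
        rw [sum_const, card_univ, nsmul_eq_mul]; ring
      _ < 1 * (card V)! := by gcongr
      _ = (card V)! := one_mul _
  obtain ⟨σ, -, hσ⟩ := exists_mem_notMem_of_card_lt_card hbad
  exact ⟨σ, fun k ↦ by simpa [bad] using fun h ↦ hσ (mem_biUnion.2 ⟨k, mem_univ k, h⟩)⟩

lemma exists_equiv_forall_card_chunked_hits_ge {J Q : Type*} [Fintype J] [Fintype Q]
    (hΩ : card Ω = card V) (hp : 0 ≤ p) (hδ : 0 ≤ δ) (hG : p * card V ^ card κ ≤ #{w | G w})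
    {block : J → Q × ι → κ → Ω} (hblock : ∀ j, Injective (uncurry (block j)))
    (hsmall : 2 * (card ι * card κ) ^ 2 ≤ card V)
    (hJQ : 2 * (card J * card Q : ℕ) * Real.exp (-(δ ^ 2 * p / 2) * card ι) < 1) :
    ∃ σ : Ω ≃ V, ∀ j, (1 - δ) * p * card (Q × ι) ≤ #{x | G (σ ∘ block j x)} := by
  have hchunk (k : J × Q) : Injective (uncurry fun i ↦ block k.1 (k.2, i)) := by
    rintro ⟨i, x⟩ ⟨i', x'⟩ h
    simpa using hblock k.1 (a₁ := ((k.2, i), x)) (a₂ := ((k.2, i'), x')) h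
  obtain ⟨σ, hσ⟩ := exists_equiv_forall_card_hits_ge G hΩ hp hδ hG hchunk hsmall
    (by rwa [Fintype.card_prod])
  refine ⟨σ, fun j ↦ ?_⟩
  calc (1 - δ) * p * card (Q × ι) = ∑ _c : Q, (1 - δ) * p * card ι := by
        rw [sum_const, card_univ, nsmul_eq_mul, Fintype.card_prod]; push_cast; ring
    _ ≤ ∑ c, (#{i | G (σ ∘ block j (c, i))} : ℝ) := sum_le_sum fun c _ ↦ hσ (j, c)
    _ = #{x | G (σ ∘ block j x)} := by
      simp only [card_filter, Fintype.sum_prod_type, Nat.cast_sum]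

end RandomLabelling

section IndependentSet

variable {α : Type*} [Fintype α] [DecidableEq α] {f : α → α}

lemma exists_finset_forall_apply_notMem (hf : Injective f) :
    ∃ S : Finset α, (∀ k ∈ S, f k ∉ S) ∧ card α ≤ 3 * #S + #{k | f k = k} := by
  obtain ⟨S, hS, hmax⟩ := {S : Finset α | ∀ k ∈ S, f k ∉ S}.toFinite.exists_maximal ⟨∅, by simp⟩
  refine ⟨S, hS, ?_⟩
  have hcover : univ ⊆ S ∪ S.image f ∪ filter (f · ∈ S) univ ∪ filter (fun k ↦ f k = k) univ := by
    intro k _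
    by_contra hk
    simp only [mem_union, mem_image, mem_filter_univ, not_or, not_exists, not_and] at hk
    obtain ⟨⟨⟨hkS, himage⟩, hpre⟩, hfix⟩ := hk
    have hinsert : ∀ l ∈ insert k S, f l ∉ insert k S := by grind
    exact hkS (hmax hinsert (subset_insert k S) (mem_insert_self k S))
  have hpreimage : #{k | f k ∈ S} ≤ #S :=
    card_le_card_of_injOn f (fun k hk ↦ (mem_filter.1 hk).2) hf.injOn
  calc card α ≤ #S + #(S.image f) + #{k | f k ∈ S} + #{k | f k = k} :=
        (card_le_card hcover).trans <| (card_union_le _ _).trans <| by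
          gcongr; exact (card_union_le _ _).trans <| by gcongr; exact card_union_le _ _
    _ ≤ 3 * #S + #{k | f k = k} := by
      have := card_image_le (s := S) (f := f)
      lia

lemma exists_injective_forall_apply_ne {X : Type*} [Fintype X] (hf : Injective f)
    (hX : 3 * card X + #{k | f k = k} ≤ card α) :
    ∃ g : X → α, Injective g ∧ ∀ x y, f (g x) ≠ g y := by
  obtain ⟨S, hS, hcard⟩ := exists_finset_forall_apply_notMem hf
  obtain ⟨g⟩ : Nonempty (X ↪ S) := Embedding.nonempty_of_card_le <| by
    rw [Fintype.card_coe]; lia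
  exact ⟨fun x ↦ g x, Subtype.val_injective.comp g.injective,
    fun x y h ↦ hS _ (g x).2 (h ▸ (g y).2)⟩

end IndependentSet

lemma card_filter_apply_le_card_filter_lt {α V : Type*} [Fintype α] [LinearOrder V] [Fintype V]
    {Q : V → V → Prop} [DecidableRel Q] (hQ : ∀ a b, Q a b → Q b a) {u : α × Bool → V}
    (hu : Injective u) :
    #{k | Q (u (k, false)) (u (k, true))} ≤ #{p : V × V | p.1 < p.2 ∧ Q p.1 p.2} := by
  let ends (k : α) : V × V :=
    (min (u (k, false)) (u (k, true)), max (u (k, false)) (u (k, true)))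
  refine card_le_card_of_injOn ends (fun k hk ↦ ?_) (Injective.injOn fun k l h ↦ ?_)
  · have hne : u (k, false) ≠ u (k, true) := hu.ne (by simp)
    have hk : Q (u (k, false)) (u (k, true)) := by simpa using hk
    obtain hlt | hlt := hne.lt_or_gt
    · simpa [ends, hlt, hlt.le] using hk
    · simpa [ends, hlt, hlt.le] using hQ _ _ hk
  · have hmin (k : α) : ∃ b, (ends k).1 = u (k, b) :=
      (min_choice _ _).elim (fun h ↦ ⟨_, h⟩) fun h ↦ ⟨_, h⟩
    obtain ⟨b, hb⟩ := hmin k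
    obtain ⟨c, hc⟩ := hmin l
    exact congrArg Prod.fst (hu (hb.symm.trans (h ▸ hc)))

section Switcher

variable {V A : Type*}

/-- The rows `a`, `c` and the columns `b`, `d` span a switcher of the matrix `M`. No order on the
rows and columns is required. -/
abbrev IsSwitcher [Add A] (M : V → V → A) (a c b d : V) : Prop := M a b + M c d ≠ M a d + M c b

/-- The matchings `π` and `ρ` form a 4-cycle on the rows `a` and `c`, and this cycle is a switcher
of the matrix `M`. -/
abbrev IsSwitcherCycle [Add A] (M : V → V → A) (π ρ : Perm V) (a c : V) : Prop :=
  ρ⁻¹ (π a) = c ∧ ρ⁻¹ (π c) = a ∧ M a (π a) + M c (π c) ≠ M a (ρ a) + M c (ρ c)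

variable {M : V → V → A}

lemma IsSwitcher.swap_cols [Add A] {a c b d : V} (h : IsSwitcher M a c b d) :
    IsSwitcher M a c d b :=
  h.symm

variable [AddCommMagma A]

lemma IsSwitcher.swap_rows {a c b d : V} (h : IsSwitcher M a c b d) : IsSwitcher M c a b d := by
  rw [IsSwitcher, add_comm (M c b), add_comm (M c d)]
  exact h.symm

lemma IsSwitcherCycle.symm {π ρ : Perm V} {a c : V} (h : IsSwitcherCycle M π ρ a c) :
    IsSwitcherCycle M π ρ c a :=
  ⟨h.2.1, h.1, by simpa only [add_comm] using h.2.2⟩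

variable [LinearOrder V] [Fintype V]

lemma four_mul_card_switchers_le [DecidableEq A] :
    4 * #{p : V × V × V × V |
        p.1 < p.2.1 ∧ p.2.2.1 < p.2.2.2 ∧ IsSwitcher M p.1 p.2.1 p.2.2.1 p.2.2.2} ≤
      #{w : Fin 4 → V | IsSwitcher M (w 0) (w 1) (w 2) (w 3)} := by
  let swap : (V × V × V × V) × Bool × Bool → Fin 4 → V := fun ((a, c, b, d), x, y) ↦
    ![if x then c else a, if x then a else c, if y then d else b, if y then b else d]
  set switchers : Finset (V × V × V × V) :=
    {p | p.1 < p.2.1 ∧ p.2.2.1 < p.2.2.2 ∧ IsSwitcher M p.1 p.2.1 p.2.2.1 p.2.2.2}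
  have hcard : 4 * #switchers = #(switchers ×ˢ (univ : Finset (Bool × Bool))) := by
    simp [card_product, mul_comm]
  rw [hcard]
  refine card_le_card_of_injOn swap ?_ ?_
  · rintro ⟨⟨a, c, b, d⟩, x, y⟩ h
    have hM : IsSwitcher M a c b d := (mem_filter.1 (mem_product.1 h).1).2.2.2
    refine mem_filter.2 ⟨mem_univ _, ?_⟩
    cases x <;> cases y
    exacts [hM, hM.swap_cols, hM.swap_rows, hM.swap_rows.swap_cols]
  · rintro ⟨⟨a, c, b, d⟩, x, y⟩ h ⟨⟨a', c', b', d'⟩, x', y'⟩ h' heq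
    obtain ⟨hac, hbd, -⟩ := by simpa [switchers] using h
    obtain ⟨hac', hbd', -⟩ := by simpa [switchers] using h'
    simp only [swap, Matrix.vecCons_inj] at heq
    grind

end Switcher

lemma exists_chunk_size {c : ℝ} (hc : 0 < c) :
    ∃ n₀ : ℕ, ∀ n : ℕ, n₀ ≤ n →
      ∃ r, 0 < r ∧ 64 * r ^ 2 ≤ n ∧ 2 * (n : ℝ) ^ 2 * Real.exp (-c * r) < 1 := by
  have hlim : Tendsto (fun r : ℕ ↦ (r : ℝ) ^ 4 * Real.exp (-c) ^ r) atTop (𝓝 0) :=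
    tendsto_pow_const_mul_const_pow_of_abs_lt_one 4 (by simpa using hc)
  have hroot : Tendsto (fun n : ℕ ↦ (n / 64).sqrt) atTop atTop := by
    refine tendsto_atTop_atTop.2 fun b ↦ ⟨64 * b ^ 2, fun n hn ↦ Nat.le_sqrt'.2 ?_⟩
    lia
  obtain ⟨n₀, h⟩ := eventually_atTop.1 (hroot.eventually
    ((hlim.eventually_lt_const (u := 1 / 131072) (by norm_num)).and (eventually_gt_atTop 0)))
  refine ⟨n₀, fun n hn ↦ ⟨_, (h n hn).2, ?_, ?_⟩⟩
  · have := (n / 64).sqrt_le'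
    lia
  obtain ⟨hsmall, hpos⟩ := h n hn
  set r := (n / 64).sqrt
  have hn : n ≤ 256 * r ^ 2 := by
    have : n / 64 < (r + 1) ^ 2 := Nat.lt_succ_sqrt' _
    nlinarith [Nat.div_add_mod n 64, n.mod_lt (show 64 > 0 by simp)]
  calc 2 * (n : ℝ) ^ 2 * Real.exp (-c * r)
      ≤ 2 * (256 * r ^ 2) ^ 2 * Real.exp (-c * r) := by gcongr; exact_mod_cast hn
    _ = 131072 * (r ^ 4 * Real.exp (-c) ^ r) := by
      rw [← Real.exp_nat_mul, mul_comm (r : ℝ)]; ring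
    _ < 1 := by linarith

lemma exists_chunk_count {m r : ℕ} (hr : 0 < r) (hm : 21 * r + 3 ≤ m) :
    ∃ q, 3 * (q * r) + 1 ≤ m ∧ 2 * m + 1 ≤ 7 * (q * r) := by
  refine ⟨(m - 1) / 3 / r, ?_⟩
  have hle := Nat.div_mul_le_self ((m - 1) / 3) r
  have hlt := Nat.lt_div_mul_add (a := (m - 1) / 3) hr
  lia

section SwitcherBlock

variable {α V A : Type*}

/-- The rows of the block `k` followed by the columns of the block `l`, in the order in which
`IsSwitcher` takes them. -/
def blockCorners (k l : α) : Fin 4 → Option (α × Bool) :=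
  ![some (k, false), some (k, true), some (l, false), some (l, true)]

lemma uncurry_blockCorners_injective {X : Type*} {f g : X → α} (hf : Injective f)
    (hg : Injective g) (hgf : ∀ x y, g x ≠ f y) :
    Injective (uncurry fun x ↦ blockCorners (f x) (g x)) := by
  rintro ⟨x, s⟩ ⟨y, t⟩ h
  fin_cases s <;> fin_cases t <;>
    simp_all [blockCorners, hf.eq_iff, hg.eq_iff, (hgf _ _).symm]

variable [DecidableEq A] [Fintype α] [DecidableEq α] [Fintype V] {M : V → V → A} {τ : α → α → α}

/-- The blocks whose rows form a 4-cycle in the `j`-th 2-factor that is a switcher of `M`. -/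
def switcherBlocks [Add A] (M : V → V → A) (τ : α → α → α) (σ : Option (α × Bool) ≃ V) (j : α) :
    Finset α :=
  {k | k ≠ j ∧ IsSwitcher M (σ (some (k, false))) (σ (some (k, true)))
    (σ (some (τ j k, false))) (σ (some (τ j k, true)))}

lemma exists_equiv_forall_le_card_switcherBlocks [Add A] (hτ : IsIdempotentLatin_s12 τ)
    (hV : card V = 2 * card α + 1) {p δ : ℝ} (hp : 0 ≤ p) (hδ : 0 ≤ δ)
    (hM : p * card V ^ 4 ≤ #{w : Fin 4 → V | IsSwitcher M (w 0) (w 1) (w 2) (w 3)}) {q r : ℕ}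
    (hqr : 3 * (q * r) + 1 ≤ card α) (hr : 32 * r ^ 2 ≤ card V)
    (hexp : 2 * (card α * q : ℕ) * Real.exp (-(δ ^ 2 * p / 2) * r) < 1) :
    ∃ σ : Option (α × Bool) ≃ V, ∀ j, (1 - δ) * p * (q * r : ℕ) ≤ #(switcherBlocks M τ σ j) := by
  have hchoice (j : α) :
      ∃ g : Fin q × Fin r → α, Injective g ∧ ∀ x y, τ j (g x) ≠ g y :=
    exists_injective_forall_apply_ne (hτ.injective_row j)
      (by simpa [hτ.apply_eq_right_iff, filter_eq'] using hqr)
  choose g hg hτg using hchoice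
  obtain ⟨σ, hσ⟩ := exists_equiv_forall_card_chunked_hits_ge
    (fun w : Fin 4 → V ↦ IsSwitcher M (w 0) (w 1) (w 2) (w 3)) (Ω := Option (α × Bool))
    (block := fun j x ↦ blockCorners (g j x) (τ j (g j x))) (by simp [hV, mul_comm]) hp hδ
    (by simpa using hM)
    (fun j ↦ uncurry_blockCorners_injective (hg j) ((hτ.injective_row j).comp (hg j)) (hτg j))
    (by simp; lia) (by simpa using hexp)
  refine ⟨σ, fun j ↦ le_trans (by simpa using hσ j) (Nat.cast_le.2 ?_)⟩
  refine card_le_card_of_injOn (g j) (fun x hx ↦ ?_) (hg j).injOn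
  have hgj : g j x ≠ j := fun h ↦ hτg j x x (hτ.apply_eq_right_iff.2 h)
  simpa [switcherBlocks, hgj, blockCorners] using (mem_filter.1 hx).2

variable [AddCommMagma A] [LinearOrder V]

lemma card_switcherBlocks_le (hτ : IsIdempotentLatin_s12 τ) (σ : Option (α × Bool) ≃ V) (j : α) :
    #(switcherBlocks M τ σ j) ≤ #{p : V × V | p.1 < p.2 ∧
      IsSwitcherCycle M (factorMatching hτ σ j true) (factorMatching hτ σ j false) p.1 p.2} := by
  refine le_trans (card_le_card fun k hk ↦ ?_) <|
    card_filter_apply_le_card_filter_lt (Q := IsSwitcherCycle M _ _)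
      (fun _ _ h ↦ h.symm) (σ.injective.comp (Option.some_injective _))
  obtain ⟨hkj, hk⟩ : k ≠ j ∧ _ := by simpa [switcherBlocks] using hk
  simpa [-Perm.coe_inv, IsSwitcherCycle, Perm.inv_eq_iff_eq, factorMatching_apply_label,
    blockMatching_of_ne hkj] using hk

lemma exists_equiv_forall_half_mul_le_card_switcherBlocks (hτ : IsIdempotentLatin_s12 τ)
    (hV : card V = 2 * card α + 1) {η : ℝ} (hη : 0 ≤ η)
    (hM : η * card V ^ 4 ≤ #{p : V × V × V × V |
      p.1 < p.2.1 ∧ p.2.2.1 < p.2.2.2 ∧ IsSwitcher M p.1 p.2.1 p.2.2.1 p.2.2.2}) {r : ℕ}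
    (hr : 0 < r) (hrV : 64 * r ^ 2 ≤ card V)
    (hexp : 2 * card V ^ 2 * Real.exp (-(η / 32) * r) < 1) :
    ∃ σ : Option (α × Bool) ≃ V, ∀ j, η * card V / 2 ≤ #(switcherBlocks M τ σ j) := by
  obtain ⟨q, hqr, hVqr⟩ := exists_chunk_count (m := card α) hr (by nlinarith)
  have hq : q ≤ q * r := Nat.le_mul_of_pos_right q hr
  have hM' : 4 * η * card V ^ 4 ≤
      #{w : Fin 4 → V | IsSwitcher M (w 0) (w 1) (w 2) (w 3)} := by
    calc 4 * η * card V ^ 4 = 4 * (η * card V ^ 4) := by ring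
      _ ≤ _ := mul_le_mul_of_nonneg_left hM (by norm_num)
      _ ≤ _ := by exact_mod_cast four_mul_card_switchers_le
  have hexp' : 2 * (card α * q : ℕ) * Real.exp (-((1 / 8) ^ 2 * (4 * η) / 2) * r) < 1 := by
    refine lt_of_le_of_lt ?_ hexp
    rw [show (1 / 8) ^ 2 * (4 * η) / 2 = η / 32 by ring]
    gcongr
    exact_mod_cast show card α * q ≤ card V ^ 2 by
      rw [sq]; exact Nat.mul_le_mul (by lia) (by lia)
  obtain ⟨σ, hσ⟩ := exists_equiv_forall_le_card_switcherBlocks hτ hV (by positivity)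
    (by norm_num) hM' hqr (by lia) hexp'
  refine ⟨σ, fun j ↦ le_trans ?_ (hσ j)⟩
  have : (card V : ℝ) ≤ 7 * (q * r : ℕ) := by exact_mod_cast hV ▸ hVqr
  nlinarith

end SwitcherBlock

theorem odd_case_switcher_rich_two_factorization_general {A : Type*} [AddCommMagma A]
    [DecidableEq A] :
    ∀ η : ℝ, 0 < η →
    ∃ n₀ : ℕ, ∀ n : ℕ, n₀ ≤ n → Odd n →
    ∀ M : Fin n → Fin n → A,
    (#{p : Fin n × Fin n × Fin n × Fin n |
      p.1 < p.2.1 ∧ p.2.2.1 < p.2.2.2 ∧ IsSwitcher M p.1 p.2.1 p.2.2.1 p.2.2.2} : ℝ) ≥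
        η * n ^ 4 →
    ∃ π ρ : Fin ((n - 1) / 2) → Perm (Fin n),
      (∀ j i, π j i ≠ i ∧ ρ j i ≠ i ∧ π j i ≠ ρ j i) ∧
      (∀ i k : Fin n, k ≠ i →
        ∃! jb : Fin ((n - 1) / 2) × Bool, (if jb.2 then π jb.1 i else ρ jb.1 i) = k) ∧
      (∀ j, (#{p : Fin n × Fin n | p.1 < p.2 ∧ IsSwitcherCycle M (π j) (ρ j) p.1 p.2} : ℝ) ≥
        η * n / 2) := by
  intro η hη
  obtain ⟨n₀, hn₀⟩ := exists_chunk_size (c := η / 32) (by positivity)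
  refine ⟨n₀, fun n hn hodd M hM ↦ ?_⟩
  obtain ⟨r, hr, hrn, hexp⟩ := hn₀ n hn
  obtain ⟨m, rfl⟩ := hodd
  rw [show (2 * m + 1 - 1) / 2 = m by lia]
  obtain ⟨τ, hτ⟩ := exists_isIdempotentLatin_s12 (m := m) (by nlinarith)
  obtain ⟨σ, hσ⟩ := exists_equiv_forall_half_mul_le_card_switcherBlocks (V := Fin (2 * m + 1))
    (M := M) hτ (by simp) hη.le (by simpa using hM) hr (by simpa using hrn) (by simpa using hexp)
  refine ⟨fun j ↦ factorMatching hτ σ j true, fun j ↦ factorMatching hτ σ j false,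
    fun j i ↦ ⟨factorMatching_ne_self hτ σ j true i, factorMatching_ne_self hτ σ j false i,
      factorMatching_true_ne_false hτ σ j i⟩, fun i k hki ↦ ?_, fun j ↦ ?_⟩
  · convert existsUnique_factorMatching_eq hτ σ hki using 3 with jb
    cases jb.2 <;> rfl
  · exact (by simpa using hσ j : _ ≤ _).trans (Nat.cast_le.2 (card_switcherBlocks_le hτ σ j))

theorem odd_case_switcher_rich_two_factorization :
    ∀ η : ℝ, 0 < η →
    ∃ n₀ : ℕ, ∀ n : ℕ, n₀ ≤ n → Odd n →
    ∀ M : Fin n → Fin n → ℤ, IsSigning n M →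
    (switcherCount n M : ℝ) ≥ η * n ^ 4 →
    ∃ π ρ : Fin ((n - 1) / 2) → Equiv.Perm (Fin n),
      (∀ j i, π j i ≠ i ∧ ρ j i ≠ i ∧ π j i ≠ ρ j i) ∧
      (∀ i k : Fin n, k ≠ i →
        ∃! jb : Fin ((n - 1) / 2) × Bool,
          (if jb.2 then π jb.1 i else ρ jb.1 i) = k) ∧
      (∀ j, ((univ.filter fun p : Fin n × Fin n =>
          p.1 < p.2 ∧ (ρ j)⁻¹ (π j p.1) = p.2 ∧ (ρ j)⁻¹ (π j p.2) = p.1 ∧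
            M p.1 (π j p.1) + M p.2 (π j p.2) ≠
              M p.1 (ρ j p.1) + M p.2 (ρ j p.2)).card : ℝ) ≥ η * n / 2) :=
  fun η hη ↦ (odd_case_switcher_rich_two_factorization_general η hη).imp
    fun _ h n hn hodd M _ hM ↦ h n hn hodd M hM
end

section
/- Let M be a signing of K_{n,n}, viewed as an n × n matrix over ℤ. Then ∑ i, ∑ j, (∑ k, M i k · M j k)² = n⁴ − 8·s₂(M). Equivalently, the trace of (M·Mᵀ)² equals n⁴ − 8·s₂(M). -/
open Finset

/-- `s₂(M)`: the number of Type-2 switchers of `M`, i.e. quadruples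
`(a, c, b, d)` with `a < c`, `b < d` and `M a b * M a d * M c b * M c d = -1`. -/
def type2SwitcherCount (n : ℕ) (M : Fin n → Fin n → ℤ) : ℕ :=
  (univ.filter fun p : Fin n × Fin n × Fin n × Fin n =>
    p.1 < p.2.1 ∧ p.2.2.1 < p.2.2.2 ∧
      M p.1 p.2.2.1 * M p.1 p.2.2.2 * M p.2.1 p.2.2.1 * M p.2.1 p.2.2.2 = -1).card

/-!
Expanding the squares turns the fourth moment into the sum of the signs
`M a b * M a d * M c b * M c d` over all quadruples `(a, c, b, d)`. Hence `n ^ 4` minus the fourth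
moment is the sum of the defects `1 - sign`, each of which is `2` or `0`. A defect vanishes when
`a = c` or `b = d` and is unchanged by swapping `a` with `c` or `b` with `d`, so every Type-2
switcher contributes `2` four times.
-/

open scoped Matrix

section SymmetricSums

variable {ι A : Type*} [Fintype ι] [LinearOrder ι] [AddCommMonoid A]

theorem sum_sum_eq_two_nsmul_sum_sum_lt {f : ι → ι → A} (hsymm : ∀ a c, f a c = f c a)
    (hdiag : ∀ a, f a a = 0) :
    ∑ a, ∑ c, f a c = 2 • ∑ a, ∑ c with a < c, f a c := by
  have split_lt_gt (a c : ι) :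
      f a c = (if a < c then f a c else 0) + if c < a then f c a else 0 := by
    rcases lt_trichotomy a c with h | rfl | h
    · simp [h, h.not_gt]
    · simp [hdiag]
    · simp [h, h.not_gt, hsymm a c]
  calc ∑ a, ∑ c, f a c
      = ∑ a, ∑ c, ((if a < c then f a c else 0) + if c < a then f c a else 0) :=
        sum_congr rfl fun a _ => sum_congr rfl fun c _ => split_lt_gt a c
    _ = (∑ a, ∑ c, if a < c then f a c else 0) + ∑ c, ∑ a, if c < a then f c a else 0 := by
        simp only [sum_add_distrib]
        rw [sum_comm (f := fun a c => if c < a then f c a else 0)]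
    _ = 2 • ∑ a, ∑ c with a < c, f a c := by
        simp only [two_nsmul, sum_filter]

end SymmetricSums

section Signs

variable {R : Type*}

theorem mul_eq_one_or_neg_one [MulOneClass R] [HasDistribNeg R] {x y : R} (hx : x = 1 ∨ x = -1)
    (hy : y = 1 ∨ y = -1) :
    x * y = 1 ∨ x * y = -1 := by
  rcases hx with rfl | rfl <;> rcases hy with rfl | rfl <;> simp

theorem mul_self_eq_one_of_eq_one_or_neg_one [MulOneClass R] [HasDistribNeg R] {x : R}
    (hx : x = 1 ∨ x = -1) :
    x * x = 1 := by
  rcases hx with rfl | rfl <;> simp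

theorem one_sub_eq_ite_of_eq_one_or_neg_one [AddGroupWithOne R] [DecidableEq R] {x : R}
    (hx : x = 1 ∨ x = -1) :
    1 - x = if x = -1 then 2 else 0 := by
  split_ifs with h
  · rw [h, sub_neg_eq_add, one_add_one_eq_two]
  · rw [hx.resolve_right h, sub_self]

end Signs

section CycleSign

variable {ι κ R : Type*} [CommRing R]

/-- The sign of the 4-cycle of the complete bipartite graph on `ι` and `κ` with vertices `a`, `c`
in `ι` and `b`, `d` in `κ`, the matrix `M` holding the signs of the edges. The cycle may be
degenerate: `a = c` and `b = d` are allowed. -/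
def cycleSign (M : Matrix ι κ R) (a c : ι) (b d : κ) : R :=
  M a b * M a d * M c b * M c d

theorem cycleSign_row_comm (M : Matrix ι κ R) (a c : ι) (b d : κ) :
    cycleSign M a c b d = cycleSign M c a b d := by
  unfold cycleSign; ring

theorem cycleSign_col_comm (M : Matrix ι κ R) (a c : ι) (b d : κ) :
    cycleSign M a c b d = cycleSign M a c d b := by
  unfold cycleSign; ring

theorem sum_sq_sum_mul_eq_sum_cycleSign [Fintype ι] [Fintype κ] (M : Matrix ι κ R) :
    ∑ i, ∑ j, (∑ k, M i k * M j k) ^ 2 = ∑ a, ∑ c, ∑ b, ∑ d, cycleSign M a c b d := by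
  refine sum_congr rfl fun a _ => sum_congr rfl fun c _ => ?_
  rw [sq, sum_mul_sum]
  refine sum_congr rfl fun b _ => sum_congr rfl fun d _ => ?_
  unfold cycleSign; ring

variable {M : Matrix ι κ R} (hM : ∀ i j, M i j = 1 ∨ M i j = -1)
include hM

theorem cycleSign_eq_one_or_neg_one (a c : ι) (b d : κ) :
    cycleSign M a c b d = 1 ∨ cycleSign M a c b d = -1 :=
  mul_eq_one_or_neg_one
    (mul_eq_one_or_neg_one (mul_eq_one_or_neg_one (hM a b) (hM a d)) (hM c b)) (hM c d)

theorem cycleSign_row_self (a : ι) (b d : κ) : cycleSign M a a b d = 1 := by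
  rw [cycleSign, mul_assoc,
    mul_self_eq_one_of_eq_one_or_neg_one (mul_eq_one_or_neg_one (hM a b) (hM a d))]

theorem cycleSign_col_self (a c : ι) (b : κ) : cycleSign M a c b b = 1 := by
  rw [cycleSign, mul_assoc, mul_self_eq_one_of_eq_one_or_neg_one (hM a b),
    mul_self_eq_one_of_eq_one_or_neg_one (hM c b), one_mul]

end CycleSign

section Switchers

variable {ι κ R : Type*} [Fintype ι] [LinearOrder ι] [Fintype κ] [LinearOrder κ] [CommRing R]
  [DecidableEq R]

/-- The Type-2 switchers `(a, c, b, d)` of a rectangular matrix: its negative 4-cycles, each listed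
once, with `a < c` and `b < d`. -/
def type2Switchers (M : Matrix ι κ R) : Finset (ι × ι × κ × κ) :=
  {p | p.1 < p.2.1 ∧ p.2.2.1 < p.2.2.2 ∧ cycleSign M p.1 p.2.1 p.2.2.1 p.2.2.2 = -1}

theorem card_type2Switchers (M : Matrix ι κ R) :
    #(type2Switchers M) =
      ∑ a, ∑ c with a < c, ∑ b, ∑ d with b < d, if cycleSign M a c b d = -1 then 1 else 0 := by
  simp only [type2Switchers, card_filter, Fintype.sum_prod_type, sum_filter, ite_and,
    sum_ite_irrel, sum_const_zero]

theorem sum_one_sub_cycleSign {M : Matrix ι κ R} (hM : ∀ i j, M i j = 1 ∨ M i j = -1) :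
    ∑ a, ∑ c, ∑ b, ∑ d, (1 - cycleSign M a c b d) = 8 * #(type2Switchers M) := by
  have sum_cols (a c : ι) : ∑ b, ∑ d, (1 - cycleSign M a c b d) =
      2 • ∑ b, ∑ d with b < d, (1 - cycleSign M a c b d) :=
    sum_sum_eq_two_nsmul_sum_sum_lt (fun b d => by rw [cycleSign_col_comm])
      (fun b => by rw [cycleSign_col_self hM, sub_self])
  have defect (a c : ι) (b d : κ) :
      1 - cycleSign M a c b d = 2 * if cycleSign M a c b d = -1 then 1 else 0 := by
    rw [one_sub_eq_ite_of_eq_one_or_neg_one (cycleSign_eq_one_or_neg_one hM a c b d), mul_ite,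
      mul_one, mul_zero]
  calc ∑ a, ∑ c, ∑ b, ∑ d, (1 - cycleSign M a c b d)
      = 2 • ∑ a, ∑ c with a < c, ∑ b, ∑ d, (1 - cycleSign M a c b d) :=
        sum_sum_eq_two_nsmul_sum_sum_lt (fun a c => by simp only [cycleSign_row_comm M a c])
          (fun a => by simp only [cycleSign_row_self hM, sub_self, sum_const_zero])
    _ = 2 • ∑ a, ∑ c with a < c, 2 • ∑ b, ∑ d with b < d, (1 - cycleSign M a c b d) := by
        simp only [sum_cols]
    _ = 8 * #(type2Switchers M) := by
        simp only [defect, ← mul_sum, card_type2Switchers, Nat.cast_sum, Nat.cast_ite,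
          Nat.cast_one, Nat.cast_zero, nsmul_eq_mul, Nat.cast_ofNat]
        ring

theorem type2SwitcherCount_eq_card (n : ℕ) (M : Fin n → Fin n → ℤ) :
    type2SwitcherCount n M = #(type2Switchers (Matrix.of M)) :=
  rfl

end Switchers

section Trace

variable {ι κ R : Type*} [Fintype ι] [DecidableEq ι]

theorem trace_sq_eq_sum_sq_of_isSymm [Semiring R] {G : Matrix ι ι R} (hG : G.IsSymm) :
    (G ^ 2).trace = ∑ i, ∑ j, G i j ^ 2 := by
  simp only [sq, Matrix.trace, Matrix.diag, Matrix.mul_apply, hG.apply]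

theorem trace_sq_mul_transpose_self [CommSemiring R] [Fintype κ] (M : Matrix ι κ R) :
    ((M * Mᵀ) ^ 2).trace = ∑ i, ∑ j, (∑ k, M i k * M j k) ^ 2 :=
  trace_sq_eq_sum_sq_of_isSymm <| by
    rw [Matrix.IsSymm, Matrix.transpose_mul, Matrix.transpose_transpose]

end Trace

theorem fourth_moment_identity_general {ι κ R : Type*} [Fintype ι] [LinearOrder ι] [Fintype κ]
    [LinearOrder κ] [CommRing R] [DecidableEq R] {M : Matrix ι κ R}
    (hM : ∀ i j, M i j = 1 ∨ M i j = -1) :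
    ∑ i, ∑ j, (∑ k, M i k * M j k) ^ 2 =
      (Fintype.card ι : R) ^ 2 * (Fintype.card κ : R) ^ 2 - 8 * #(type2Switchers M) ∧
    ((M * Mᵀ) ^ 2).trace =
      (Fintype.card ι : R) ^ 2 * (Fintype.card κ : R) ^ 2 - 8 * #(type2Switchers M) := by
  rw [trace_sq_mul_transpose_self, and_self, sum_sq_sum_mul_eq_sum_cycleSign,
    ← sum_one_sub_cycleSign hM]
  simp only [sum_sub_distrib, sum_const, card_univ, nsmul_eq_mul, mul_one]
  ring

theorem fourth_moment_identity (n : ℕ) (M : Fin n → Fin n → ℤ)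
    (hM : IsSigning n M) :
    (∑ i, ∑ j, (∑ k, M i k * M j k) ^ 2) =
      (n : ℤ) ^ 4 - 8 * type2SwitcherCount n M ∧
    Matrix.trace ((Matrix.of M * Matrix.transpose (Matrix.of M)) ^ 2) =
      (n : ℤ) ^ 4 - 8 * type2SwitcherCount n M := by
  simpa only [Fintype.card_fin, ← pow_add, Nat.reduceAdd, Matrix.of_apply,
    type2SwitcherCount_eq_card] using fourth_moment_identity_general (M := Matrix.of M) hM
end

section
/- Let x, y : Fin n → ℤ be vectors with all entries ±1, and let A be the rank-one sign matrix A i j = x i · y j. Then s₁(A) = x⁺·x⁻·y⁺·y⁻, where x⁺, x⁻ are the numbers of +1 and −1 entries of x, and y⁺, y⁻ are the numbers of +1 and −1 entries of y. -/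
open Finset

/-- `s₁(A)`: the number of Type-1 switchers of `A`, i.e. quadruples
`(a, c, b, d)` with `a < c`, `b < d`, `A a b * A a d * A c b * A c d = 1`
and `A a b + A c d ≠ A a d + A c b`. -/
def type1SwitcherCount (n : ℕ) (A : Fin n → Fin n → ℤ) : ℕ :=
  (univ.filter fun p : Fin n × Fin n × Fin n × Fin n =>
    p.1 < p.2.1 ∧ p.2.2.1 < p.2.2.2 ∧
      A p.1 p.2.2.1 * A p.1 p.2.2.2 * A p.2.1 p.2.2.1 * A p.2.1 p.2.2.2 = 1 ∧
      A p.1 p.2.2.1 + A p.2.1 p.2.2.2 ≠ A p.1 p.2.2.2 + A p.2.1 p.2.2.1).card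

/-!
For `A i j = x i * y j` we have `A a b + A c d - A a d - A c b = (x a - x c) * (y b - y d)`, while
the product of the four entries is a square of a sign. So the Type-1 switchers are the pairs of row
and column pairs on which `x` and `y`, respectively, take different values; and each pair
`{a, c}` with `x a ≠ x c` consists of one index of each sign.
-/

/-- The unordered pairs of indices at which `f` takes distinct values, each pair being encoded by
listing its smaller index first. The switchers of a rank-one sign matrix `x i * y j` are pairs of
such pairs for `x` and `y`. -/
def separatedPairs {α β : Type*} [Fintype α] [LinearOrder α] [DecidableEq β] (f : α → β) :
    Finset (α × α) :=
  {p | p.1 < p.2 ∧ f p.1 ≠ f p.2}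

section SeparatedPairs

variable {α β : Type*} [Fintype α] [LinearOrder α] [DecidableEq β] {f : α → β}

@[simp]
lemma mem_separatedPairs {a b : α} : (a, b) ∈ separatedPairs f ↔ a < b ∧ f a ≠ f b := by
  simp [separatedPairs]

/-- Sorting, `(a, b) ↦ (min a b, max a b)`, is a bijection from the product of the fibres onto
the separated pairs: `f` tells which of the two sorted indices came from which fibre. -/
lemma card_separatedPairs {u v : β} (huv : u ≠ v) (hf : ∀ i, f i = u ∨ f i = v) :
    #(separatedPairs f) = #{i | f i = u} * #{i | f i = v} := by
  rw [eq_comm, ← card_product]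
  refine card_nbij (fun p => (min p.1 p.2, max p.1 p.2)) ?mapsTo ?injOn ?surjOn
  case mapsTo =>
    rintro ⟨a, b⟩ hab
    obtain ⟨ha, hb⟩ : f a = u ∧ f b = v := by simpa using hab
    have hne : a ≠ b := fun heq => huv (ha.symm.trans (heq ▸ hb))
    rcases hne.lt_or_gt with h | h <;> simp [h, h.le, ha, hb, huv, huv.symm]
  case injOn =>
    rintro ⟨a, b⟩ hab ⟨c, d⟩ hcd hsort
    obtain ⟨ha, hb⟩ : f a = u ∧ f b = v := by simpa using hab
    obtain ⟨hc, hd⟩ : f c = u ∧ f d = v := by simpa using hcd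
    have same_or_swapped : a = c ∧ b = d ∨ a = d ∧ b = c := by grind
    rcases same_or_swapped with ⟨rfl, rfl⟩ | ⟨rfl, rfl⟩
    · rfl
    · exact absurd (ha.symm.trans hd) huv
  case surjOn =>
    rintro ⟨a, b⟩ hab
    obtain ⟨hlt, hne⟩ : a < b ∧ f a ≠ f b := by simpa using hab
    rcases hf a with ha | ha
    · have hb : f b = v := (hf b).resolve_left fun heq => hne (ha.trans heq.symm)
      exact ⟨(a, b), by simp [ha, hb], by simp [hlt.le]⟩
    · have hb : f b = u := (hf b).resolve_right fun heq => hne (ha.trans heq.symm)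
      exact ⟨(b, a), by simp [ha, hb], by simp [hlt.le]⟩

end SeparatedPairs

lemma mul_add_mul_eq_mul_add_mul_swap_iff {R : Type*} [CommRing R] [NoZeroDivisors R]
    {p q r s : R} : p * r + q * s = p * s + q * r ↔ p = q ∨ r = s := by
  have factor : p * r + q * s - (p * s + q * r) = (p - q) * (r - s) := by ring
  rw [← sub_eq_zero, factor, mul_eq_zero, sub_eq_zero, sub_eq_zero]

lemma rectangle_prod_eq_one {M : Type*} [CommMonoid M] {p q r s : M}
    (hp : p ^ 2 = 1) (hq : q ^ 2 = 1) (hr : r ^ 2 = 1) (hs : s ^ 2 = 1) :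
    p * r * (p * s) * (q * r) * (q * s) = 1 := by
  calc p * r * (p * s) * (q * r) * (q * s) = p ^ 2 * q ^ 2 * (r ^ 2 * s ^ 2) := by
        simp only [pow_two]; ac_rfl
    _ = 1 := by simp only [hp, hq, hr, hs, mul_one]

lemma type1SwitcherCount_rank_one {n : ℕ} {x y : Fin n → ℤ}
    (hx : ∀ i, x i ^ 2 = 1) (hy : ∀ j, y j ^ 2 = 1) :
    type1SwitcherCount n (fun i j => x i * y j) = #(separatedPairs x) * #(separatedPairs y) := by
  rw [← card_product, type1SwitcherCount]
  refine card_equiv (Equiv.prodAssoc _ _ _).symm ?_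
  rintro ⟨a, c, b, d⟩
  have hprod := rectangle_prod_eq_one (hx a) (hx c) (hy b) (hy d)
  simp only [mem_filter_univ, hprod, ne_eq, mul_add_mul_eq_mul_add_mul_swap_iff, true_and,
    Equiv.prodAssoc_symm_apply, mem_product, mem_separatedPairs]
  tauto

theorem type1_count_rank_one (n : ℕ) (x y : Fin n → ℤ)
    (hx : ∀ i, x i = 1 ∨ x i = -1) (hy : ∀ j, y j = 1 ∨ y j = -1) :
    type1SwitcherCount n (fun i j => x i * y j) =
      (univ.filter fun i => x i = 1).card *
      (univ.filter fun i => x i = -1).card *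
      (univ.filter fun j => y j = 1).card *
      (univ.filter fun j => y j = -1).card := by
  have hx_sq (i : Fin n) : x i ^ 2 = 1 := sq_eq_one_iff.mpr (hx i)
  have hy_sq (j : Fin n) : y j ^ 2 = 1 := sq_eq_one_iff.mpr (hy j)
  rw [type1SwitcherCount_rank_one hx_sq hy_sq, card_separatedPairs (by decide) hx,
    card_separatedPairs (by decide) hy, ← mul_assoc]
end

section
/- Let 0 < α ≤ 1/100 be real, let M be a signing of K_{n,n} with disc(M) ≤ α/3, and let x, y : Fin n → ℤ be vectors with all entries ±1 such that the number of pairs (i, j) with M i j ≠ x i · y j is at most 2·α·n². If the number of indices i with x i = 1 is at least (1 − 3·√α)·n, then |y⁺ − y⁻| ≤ 12·α·n, where y⁺ and y⁻ are the numbers of +1 and −1 entries of y. -/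
open Finset

/-- The total discrepancy of the signing `M`. -/
noncomputable def totalDisc (n : ℕ) (M : Fin n → Fin n → ℤ) : ℝ :=
  |(∑ i, ∑ j, (M i j : ℝ))| / n ^ 2

/-! The entries of the rank-one matrix `x i * y j` sum to `(∑ i, x i) * (∑ j, y j)`, and each
position where `M` departs from it changes the sum by at most `2`. So the product of the two sums
is `O(α n ^ 2)`; since at least `7 / 10` of the `x i` equal `1`, the first factor is at least
`2 / 5 * n`, which forces the second to be `O(α n)`. -/

section

variable {ι κ R : Type*} [Ring R] [LinearOrder R] [IsStrictOrderedRing R]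

lemma two_mul_card_eq_one_sub_card_le_sum (s : Finset ι) {x : ι → R}
    (hx : ∀ i ∈ s, -1 ≤ x i) :
    2 * (#{i ∈ s | x i = 1} : R) - #s ≤ ∑ i ∈ s, x i :=
  calc 2 * (#{i ∈ s | x i = 1} : R) - #s
      = ∑ i ∈ s, (2 * (if x i = 1 then 1 else 0) - 1) := by
        rw [sum_sub_distrib, ← mul_sum, sum_boole, sum_const, nsmul_one]
    _ ≤ ∑ i ∈ s, x i := by
        refine sum_le_sum fun i hi ↦ ?_
        split_ifs with h
        · norm_num [h]
        · simpa using hx i hi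

lemma sum_eq_card_eq_one_sub_card_eq_neg_one (s : Finset ι) {y : ι → ℤ}
    (hy : ∀ i ∈ s, |y i| ≤ 1) :
    ∑ i ∈ s, y i = #{i ∈ s | y i = 1} - #{i ∈ s | y i = -1} := by
  simp only [card_filter, Nat.cast_sum, ← sum_sub_distrib]
  refine sum_congr rfl fun i hi ↦ ?_
  rcases Int.abs_le_one_iff.1 (hy i hi) with h | h | h <;> simp [h]

lemma abs_sum_sub_sum_le_card_ne_nsmul {G : Type*} [AddCommGroup G] [LinearOrder G]
    [IsOrderedAddMonoid G] (s : Finset ι) {f g : ι → G} {C : G}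
    (h : ∀ i ∈ s, f i ≠ g i → |f i - g i| ≤ C) :
    |∑ i ∈ s, f i - ∑ i ∈ s, g i| ≤ #{i ∈ s | f i ≠ g i} • C :=
  calc |∑ i ∈ s, f i - ∑ i ∈ s, g i|
      = |∑ i ∈ s with f i ≠ g i, (f i - g i)| := by
        rw [← sum_sub_distrib, sum_filter_of_ne fun i _ ↦ sub_ne_zero.1]
    _ ≤ ∑ i ∈ s with f i ≠ g i, |f i - g i| := abs_sum_le_sum_abs _ _
    _ ≤ #{i ∈ s | f i ≠ g i} • C :=
        sum_le_card_nsmul _ _ _ fun i hi ↦ h i (mem_filter.1 hi).1 (mem_filter.1 hi).2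

lemma abs_sum_mul_abs_sum_le (s : Finset ι) (t : Finset κ)
    {M : ι → κ → R} {x : ι → R} {y : κ → R}
    (hM : ∀ i ∈ s, ∀ j ∈ t, |M i j| ≤ 1) (hx : ∀ i ∈ s, |x i| ≤ 1) (hy : ∀ j ∈ t, |y j| ≤ 1) :
    |∑ i ∈ s, x i| * |∑ j ∈ t, y j| ≤ |∑ i ∈ s, ∑ j ∈ t, M i j| +
      2 * #{p ∈ s ×ˢ t | M p.1 p.2 ≠ x p.1 * y p.2} := by
  have entry_le : ∀ p ∈ s ×ˢ t, |M p.1 p.2 - x p.1 * y p.2| ≤ 2 := by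
    intro p hp
    obtain ⟨hi, hj⟩ := mem_product.1 hp
    calc |M p.1 p.2 - x p.1 * y p.2| ≤ |M p.1 p.2| + |x p.1| * |y p.2| := by
          rw [← abs_mul]; exact abs_sub _ _
      _ ≤ 1 + 1 := add_le_add (hM _ hi _ hj) (mul_le_one₀ (hx _ hi) (abs_nonneg _) (hy _ hj))
      _ = 2 := one_add_one_eq_two
  have sum_close : |∑ i ∈ s, ∑ j ∈ t, M i j - (∑ i ∈ s, x i) * ∑ j ∈ t, y j| ≤
      2 * #{p ∈ s ×ˢ t | M p.1 p.2 ≠ x p.1 * y p.2} := by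
    rw [sum_mul_sum, ← sum_product', ← sum_product', ← nsmul_eq_mul']
    exact abs_sum_sub_sum_le_card_ne_nsmul _ fun p hp _ ↦ entry_le p hp
  rw [← abs_mul, ← sub_le_iff_le_add']
  exact (abs_sub_abs_le_abs_sub _ _).trans (by rwa [abs_sub_comm])

variable [Fintype ι] [Nonempty ι] [Fintype κ]

lemma one_sub_two_mul_mul_abs_sum_le {K : Type*} [CommRing K] [LinearOrder K]
    [IsStrictOrderedRing K] {δ ε η : K} {M : ι → κ → K} {x : ι → K} {y : κ → K}
    (hM : ∀ i j, |M i j| ≤ 1) (hx : ∀ i, |x i| ≤ 1) (hy : ∀ j, |y j| ≤ 1)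
    (hsum : |∑ i, ∑ j, M i j| ≤ δ * (Fintype.card ι * Fintype.card κ))
    (hclose : (#{p : ι × κ | M p.1 p.2 ≠ x p.1 * y p.2} : K) ≤
      ε * (Fintype.card ι * Fintype.card κ))
    (hone : (1 - η) * Fintype.card ι ≤ (#{i | x i = 1} : K)) :
    (1 - 2 * η) * |∑ j, y j| ≤ (δ + 2 * ε) * Fintype.card κ := by
  have card_pos : (0 : K) < Fintype.card ι := mod_cast Fintype.card_pos
  have sum_ge : (1 - 2 * η) * Fintype.card ι ≤ ∑ i, x i :=
    calc (1 - 2 * η) * Fintype.card ι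
        = 2 * ((1 - η) * Fintype.card ι) - Fintype.card ι := by ring
      _ ≤ 2 * #{i | x i = 1} - Fintype.card ι := by gcongr
      _ ≤ ∑ i, x i := two_mul_card_eq_one_sub_card_le_sum univ fun i _ ↦ (abs_le.1 (hx i)).1
  have scaled_bound :=
    calc Fintype.card ι * ((1 - 2 * η) * |∑ j, y j|)
        = (1 - 2 * η) * Fintype.card ι * |∑ j, y j| := by ring
      _ ≤ |∑ i, x i| * |∑ j, y j| := by
          gcongr
          exact sum_ge.trans (le_abs_self _)
      _ ≤ |∑ i, ∑ j, M i j| + 2 * #{p : ι × κ | M p.1 p.2 ≠ x p.1 * y p.2} :=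
          univ_product_univ (α := ι) (β := κ) ▸ abs_sum_mul_abs_sum_le univ univ
            (fun i _ j _ ↦ hM i j) (fun i _ ↦ hx i) fun j _ ↦ hy j
      _ ≤ δ * (Fintype.card ι * Fintype.card κ) +
          2 * (ε * (Fintype.card ι * Fintype.card κ)) := by gcongr
      _ = Fintype.card ι * ((δ + 2 * ε) * Fintype.card κ) := by ring
  exact le_of_mul_le_mul_left scaled_bound card_pos

theorem other_side_nearly_balanced_general {α : ℝ} (hα : α ≤ 1 / 100)
    {M : ι → κ → ℤ} {x : ι → ℤ} {y : κ → ℤ}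
    (hM : ∀ i j, |M i j| ≤ 1) (hx : ∀ i, |x i| ≤ 1) (hy : ∀ j, |y j| ≤ 1)
    (hdisc : |∑ i, ∑ j, (M i j : ℝ)| ≤ α / 3 * (Fintype.card ι * Fintype.card κ))
    (hclose : (#{p : ι × κ | M p.1 p.2 ≠ x p.1 * y p.2} : ℝ) ≤
      2 * α * (Fintype.card ι * Fintype.card κ))
    (hone : (1 - 3 * √α) * Fintype.card ι ≤ (#{i | x i = 1} : ℝ)) :
    |(#{j | y j = 1} : ℝ) - #{j | y j = -1}| ≤ 12 * α * Fintype.card κ := by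
  have sqrt_le : √α ≤ 1 / 10 := (Real.sqrt_le_left (by norm_num)).2 (by linarith)
  have bound_nonneg : 0 ≤ α * Fintype.card κ := by
    have disc_nonneg : 0 ≤ Fintype.card ι * (α * Fintype.card κ) := by
      linarith [(abs_nonneg _).trans hdisc]
    exact nonneg_of_mul_nonneg_right disc_nonneg (by positivity)
  have key := one_sub_two_mul_mul_abs_sum_le (K := ℝ) (M := fun i j ↦ M i j) (x := fun i ↦ x i)
    (y := fun j ↦ y j) (δ := α / 3) (ε := 2 * α) (η := 3 * √α) (mod_cast hM) (mod_cast hx)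
    (mod_cast hy) hdisc (mod_cast hclose) (mod_cast hone)
  have sum_eq : ∑ j, (y j : ℝ) = #{j | y j = 1} - #{j | y j = -1} :=
    mod_cast sum_eq_card_eq_one_sub_card_eq_neg_one univ fun j _ ↦ hy j
  have factor_ge : 2 / 5 * |∑ j, (y j : ℝ)| ≤ (1 - 2 * (3 * √α)) * |∑ j, (y j : ℝ)| := by
    gcongr
    linarith
  rw [← sum_eq]
  linarith

end

theorem other_side_nearly_balanced (n : ℕ) (α : ℝ) (hα : 0 < α)
    (hα' : α ≤ 1 / 100) (M : Fin n → Fin n → ℤ) (hM : IsSigning n M)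
    (hdisc : totalDisc n M ≤ α / 3)
    (x y : Fin n → ℤ)
    (hx : ∀ i, x i = 1 ∨ x i = -1) (hy : ∀ j, y j = 1 ∨ y j = -1)
    (hclose : (((univ ×ˢ univ).filter fun p : Fin n × Fin n =>
        M p.1 p.2 ≠ x p.1 * y p.2).card : ℝ) ≤ 2 * α * n ^ 2)
    (hxplus : (((univ.filter fun i => x i = 1).card : ℝ)) ≥
        (1 - 3 * Real.sqrt α) * n) :
    |((univ.filter fun j => y j = 1).card : ℝ) -
      ((univ.filter fun j => y j = -1).card : ℝ)| ≤ 12 * α * n := by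
  rcases eq_or_ne n 0 with rfl | hn
  · simp
  have : NeZero n := ⟨hn⟩
  rw [totalDisc, div_le_iff₀ (by positivity)] at hdisc
  have abs_le_one {z : ℤ} (h : z = 1 ∨ z = -1) : |z| ≤ 1 := Int.abs_le_one_iff.2 (.inr h)
  simpa using other_side_nearly_balanced_general hα' (fun i j ↦ abs_le_one (hM i j))
    (fun i ↦ abs_le_one (hx i)) (fun j ↦ abs_le_one (hy j)) (by simpa [sq] using hdisc)
    (by simpa [sq] using hclose) (by simpa using hxplus)
end
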